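/- Let f: ℝ → ℝ satisfy hypothesis (H). Define Δ = {(t,ρ) ∈ (0,∞) × (−π,π) : −r_t < ρ < r_t} and F(t,ρ) = (U_t(ρ), U_t'(ρ)). Then F is a bijection from Δ onto (0,∞) × ℝ (and indeed a C¹ diffeomorphism). -/

import Mathlib

open Real Set

/-- `U` is an even `C²` solution of `U'' + (cot ρ)·U' + f(U) = 0` on `(-π, π)`. -/
def IsEvenSol (f U : ℝ → ℝ) : Prop :=
  (∀ ρ ∈ Set.Ioo (-Real.pi) Real.pi, U (-ρ) = U ρ) ∧
  ContDiffOn ℝ 2 U (Set.Ioo (-Real.pi) Real.pi) ∧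
  ∀ ρ ∈ Set.Ioo (-Real.pi) Real.pi, ρ ≠ 0 →
    deriv (deriv U) ρ + (Real.cos ρ / Real.sin ρ) * deriv U ρ + f (U ρ) = 0

/-!
The difference quotients of `t ↦ (U_t, U_t')` solve a damped linear equation whose friction `cot ρ`
is bounded below away from `ρ = π`, so an energy estimate makes them uniformly Cauchy and `F` is
`C¹`. Let `φ = ∂U/∂t`. Since `f(x) ≥ x f'(x)`, the Wronskian `W = φ' U - φ U'` satisfies
`(sin ρ · W)' = sin ρ · φ (f(U) - U f'(U)) ≥ 0` as long as `φ > 0`, so `φ / U` does not decrease and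
`φ` stays positive. The Jacobian `J` of `F` satisfies `(sin ρ · J)' = φ U' / sin ρ < 0`, hence
`J < 0` and `F` is a local diffeomorphism.

For injectivity and surjectivity, follow a level curve `ρ = R(t)` of `U_t(ρ) = x`, `ρ ≥ 0`, `t ≥ x`.
Along it `U_t'(R(t))` has derivative `-J / U' < 0`; it starts at `0` when `t = x` and tends to `-∞`,
because `f` grows at most linearly and the energy estimate, run backwards, bounds `t` in terms of
`F(t, ρ)`. So `F` maps the half `ρ ≥ 0` bijectively onto `(0, ∞) × (-∞, 0]`, and evenness of `U_t`
gives the other half.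
-/

section Calculus

open Filter Topology

lemma le_exp_mul_of_hasDerivAt_le {E E' : ℝ → ℝ} {a b C : ℝ} (hab : a ≤ b)
    (hE : ContinuousOn E (Icc a b)) (hE' : ∀ x ∈ Ioo a b, HasDerivAt E (E' x) x)
    (hle : ∀ x ∈ Ioo a b, E' x ≤ C * E x) : E b ≤ exp (C * (b - a)) * E a := by
  have hanti : AntitoneOn (fun x => E x * exp (-C * x)) (Icc a b) := by
    refine antitoneOn_of_hasDerivWithinAt_nonpos (convex_Icc a b)
      (f' := fun x => E' x * exp (-C * x) + E x * (exp (-C * x) * -C)) (by fun_prop) ?_ ?_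
    · rw [interior_Icc]
      intro x hx
      have hexp : HasDerivAt (fun x => exp (-C * x)) (exp (-C * x) * -C) x := by
        simpa using ((hasDerivAt_id x).const_mul (-C)).exp
      exact ((hE' x hx).mul hexp).hasDerivWithinAt
    · rw [interior_Icc]
      intro x hx
      nlinarith [hle x hx, exp_pos (-C * x)]
  have hb := hanti (left_mem_Icc.2 hab) (right_mem_Icc.2 hab) hab
  calc E b = E b * exp (-C * b) * exp (C * b) := by
        rw [mul_assoc, ← exp_add]; simp
    _ ≤ E a * exp (-C * a) * exp (C * b) := by gcongr
    _ = exp (C * (b - a)) * E a := by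
        rw [mul_assoc, ← exp_add, mul_comm]; ring_nf

/-- If `y' = z` and `z' = -c z + g`, the left-hand side is the derivative of `y² + z²`. -/
lemma two_mul_add_le_of_damped {y z c g κ A B : ℝ} (hκ : 0 ≤ κ) (hA : 0 ≤ A) (hc : -κ ≤ c)
    (hg : |g| ≤ A * |y| + B) :
    2 * y * z + 2 * z * (-c * z + g) ≤ (2 * κ + A + 2) * (y ^ 2 + z ^ 2 + B ^ 2) := by
  have hforce : 2 * z * g ≤ A * (y ^ 2 + z ^ 2) + z ^ 2 + B ^ 2 :=
    calc 2 * z * g ≤ 2 * |z| * |g| := by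
          rw [mul_assoc, mul_assoc, ← abs_mul]
          gcongr
          exact le_abs_self _
      _ ≤ 2 * |z| * (A * |y| + B) := by gcongr
      _ ≤ A * (|y| ^ 2 + |z| ^ 2) + |z| ^ 2 + B ^ 2 := by
        nlinarith [mul_nonneg hA (sq_nonneg (|z| - |y|)), sq_nonneg (|z| - B)]
      _ = A * (y ^ 2 + z ^ 2) + z ^ 2 + B ^ 2 := by rw [sq_abs, sq_abs]
  have hdamp : -(2 * c * z ^ 2) ≤ 2 * κ * z ^ 2 := by nlinarith [sq_nonneg z]
  nlinarith [sq_nonneg (y - z), mul_nonneg hκ (sq_nonneg y), mul_nonneg hκ (sq_nonneg B),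
    mul_nonneg hA (sq_nonneg B), sq_nonneg y, sq_nonneg B]

lemma sq_add_sq_le_of_damped {y z c g : ℝ → ℝ} {a b κ A B : ℝ} (hκ : 0 ≤ κ) (hA : 0 ≤ A)
    (hab : a ≤ b) (hyc : ContinuousOn y (Icc a b)) (hzc : ContinuousOn z (Icc a b))
    (hy : ∀ x ∈ Ioo a b, HasDerivAt y (z x) x)
    (hz : ∀ x ∈ Ioo a b, HasDerivAt z (-c x * z x + g x) x)
    (hc : ∀ x ∈ Ioo a b, -κ ≤ c x) (hg : ∀ x ∈ Ioo a b, |g x| ≤ A * |y x| + B) :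
    y b ^ 2 + z b ^ 2 + B ^ 2 ≤
      exp ((2 * κ + A + 2) * (b - a)) * (y a ^ 2 + z a ^ 2 + B ^ 2) := by
  refine le_exp_mul_of_hasDerivAt_le (E := fun x => y x ^ 2 + z x ^ 2 + B ^ 2)
    (E' := fun x => 2 * y x * z x + 2 * z x * (-c x * z x + g x)) hab (by fun_prop)
    (fun x hx => ?_) fun x hx => two_mul_add_le_of_damped hκ hA (hc x hx) (hg x hx)
  simpa using (((hy x hx).pow 2).add ((hz x hx).pow 2)).add_const (B ^ 2)

lemma norm_le_of_damped {y z c g : ℝ → ℝ} {a b κ A B : ℝ} (hκ : 0 ≤ κ) (hA : 0 ≤ A) (hB : 0 ≤ B)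
    (hyc : ContinuousOn y (Icc a b)) (hzc : ContinuousOn z (Icc a b))
    (hy : ∀ x ∈ Ioo a b, HasDerivAt y (z x) x)
    (hz : ∀ x ∈ Ioo a b, HasDerivAt z (-c x * z x + g x) x)
    (hc : ∀ x ∈ Ioo a b, -κ ≤ c x) (hg : ∀ x ∈ Ioo a b, |g x| ≤ A * |y x| + B) :
    ∀ x ∈ Icc a b,
      ‖(y x, z x)‖ ≤ 2 * exp ((2 * κ + A + 2) * (b - a)) * (‖(y a, z a)‖ + B) := by
  intro x hx
  have hIoo : Ioo a x ⊆ Ioo a b := Ioo_subset_Ioo_right hx.2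
  have hIcc : Icc a x ⊆ Icc a b := Icc_subset_Icc_right hx.2
  have henergy := sq_add_sq_le_of_damped hκ hA hx.1 (hyc.mono hIcc) (hzc.mono hIcc)
    (fun u hu => hy u (hIoo hu)) (fun u hu => hz u (hIoo hu)) (fun u hu => hc u (hIoo hu))
    (fun u hu => hg u (hIoo hu))
  set M := exp ((2 * κ + A + 2) * (b - a))
  set N := ‖(y a, z a)‖
  have hM : exp ((2 * κ + A + 2) * (x - a)) ≤ M :=
    exp_le_exp.2 (mul_le_mul_of_nonneg_left (by linarith [hx.2]) (by positivity))
  have hM1 : 1 ≤ M := one_le_exp (mul_nonneg (by positivity) (by linarith [hx.1, hx.2]))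
  have hinit : y a ^ 2 + z a ^ 2 + B ^ 2 ≤ 4 * (N + B) ^ 2 := by
    have hya : y a ^ 2 ≤ N ^ 2 := sq_le_sq.2 ((norm_fst_le (y a, z a)).trans (le_abs_self _))
    have hza : z a ^ 2 ≤ N ^ 2 := sq_le_sq.2 ((norm_snd_le (y a, z a)).trans (le_abs_self _))
    nlinarith [mul_nonneg (norm_nonneg (y a, z a)) hB, sq_nonneg B]
  have hbound : y x ^ 2 + z x ^ 2 ≤ (2 * M * (N + B)) ^ 2 :=
    calc y x ^ 2 + z x ^ 2 ≤ M * (y a ^ 2 + z a ^ 2 + B ^ 2) := by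
          nlinarith [mul_le_mul_of_nonneg_right hM (by positivity : 0 ≤ y a ^ 2 + z a ^ 2 + B ^ 2),
            sq_nonneg B]
      _ ≤ M ^ 2 * (4 * (N + B) ^ 2) := by gcongr; exact le_self_pow₀ hM1 two_ne_zero
      _ = (2 * M * (N + B)) ^ 2 := by ring
  exact norm_prod_le_iff.2 ⟨abs_le_of_sq_le_sq (by linarith [sq_nonneg (z x)]) (by positivity),
    abs_le_of_sq_le_sq (by linarith [sq_nonneg (y x)]) (by positivity)⟩

lemma norm_le_of_damped_backward {y z c g : ℝ → ℝ} {a b κ A B : ℝ} (hκ : 0 ≤ κ) (hA : 0 ≤ A)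
    (hB : 0 ≤ B) (hab : a ≤ b) (hyc : ContinuousOn y (Icc a b)) (hzc : ContinuousOn z (Icc a b))
    (hy : ∀ x ∈ Ioo a b, HasDerivAt y (z x) x)
    (hz : ∀ x ∈ Ioo a b, HasDerivAt z (-c x * z x + g x) x)
    (hc : ∀ x ∈ Ioo a b, c x ≤ κ) (hg : ∀ x ∈ Ioo a b, |g x| ≤ A * |y x| + B) :
    ‖(y a, z a)‖ ≤ 2 * exp ((2 * κ + A + 2) * (b - a)) * (‖(y b, z b)‖ + B) := by
  have hneg : ∀ x ∈ Ioo (-b) (-a), -x ∈ Ioo a b :=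
    fun x hx => ⟨by linarith [hx.2], by linarith [hx.1]⟩
  have hmaps : MapsTo (fun x => -x) (Icc (-b) (-a)) (Icc a b) :=
    fun x hx => ⟨by linarith [hx.2], by linarith [hx.1]⟩
  have h := norm_le_of_damped (y := fun x => y (-x)) (z := fun x => -z (-x)) (c := fun x => -c (-x))
    (g := fun x => g (-x)) (a := -b) (b := -a) hκ hA hB (hyc.comp continuousOn_neg hmaps)
    (hzc.comp continuousOn_neg hmaps).neg (fun x hx => ?_) (fun x hx => ?_)
    (fun x hx => neg_le_neg (hc _ (hneg x hx))) (fun x hx => hg _ (hneg x hx)) (-a)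
    (right_mem_Icc.2 (neg_le_neg hab))
  · simpa [Prod.norm_def, sub_eq_neg_add, add_comm (-a) b] using h
  · exact ((hy _ (hneg x hx)).comp x (hasDerivAt_neg x)).congr_deriv (by simp)
  · exact ((hz _ (hneg x hx)).comp x (hasDerivAt_neg x)).neg.congr_deriv (by simp)

lemma contDiffOn_one_iff_deriv_of_isOpen {E : Type*} [NormedAddCommGroup E] [NormedSpace ℝ E]
    {g : ℝ → E} {S : Set ℝ} (hS : IsOpen S) :
    ContDiffOn ℝ 1 g S ↔ DifferentiableOn ℝ g S ∧ ContinuousOn (deriv g) S := by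
  simpa using contDiffOn_succ_iff_deriv_of_isOpen (𝕜 := ℝ) (f := g) (n := 0) hS

lemma contDiffOn_one_of_slope {E : Type*} [NormedAddCommGroup E] [NormedSpace ℝ E]
    [CompleteSpace E] {g : ℝ → E} {S : Set ℝ} (hS : IsOpen S)
    (hg : ∀ t ∈ S, ∀ ε > 0, ∃ u ∈ 𝓝 t, ∀ x ∈ u, ∀ x' ∈ u, ∀ y ∈ u, ∀ y' ∈ u, x ≠ x' → y ≠ y' →
      ‖slope g x x' - slope g y y'‖ ≤ ε) : ContDiffOn ℝ 1 g S := by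
  have hdiff : ∀ t ∈ S, HasDerivAt g (deriv g t) t := by
    intro t ht
    have hcauchy : Cauchy (map (slope g t) (𝓝[≠] t)) := by
      refine Metric.cauchy_iff.2 ⟨inferInstance, fun ε hε => ?_⟩
      obtain ⟨u, hu, h⟩ := hg t ht (ε / 2) (by positivity)
      refine ⟨_, image_mem_map (inter_mem_nhdsWithin _ hu), ?_⟩
      rintro _ ⟨x, ⟨hxt, hx⟩, rfl⟩ _ ⟨y, ⟨hyt, hy⟩, rfl⟩
      rw [dist_eq_norm]
      exact (h t (mem_of_mem_nhds hu) x hx t (mem_of_mem_nhds hu) y hy (Ne.symm hxt)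
        (Ne.symm hyt)).trans_lt (half_lt_self hε)
    obtain ⟨g', hg'⟩ := CompleteSpace.complete hcauchy
    exact (hasDerivAt_iff_tendsto_slope.2 hg').differentiableAt.hasDerivAt
  rw [contDiffOn_one_iff_deriv_of_isOpen hS]
  refine ⟨fun t ht => (hdiff t ht).differentiableAt.differentiableWithinAt, fun t ht => ?_⟩
  refine ContinuousAt.continuousWithinAt (Metric.continuousAt_iff'.2 fun ε hε => ?_)
  obtain ⟨u, hu, h⟩ := hg t ht (ε / 2) (by positivity)
  filter_upwards [eventually_mem_nhds_iff.2 hu, hS.mem_nhds ht] with x hx hxS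
  have hslope : ∀ y, u ∈ 𝓝 y → ∀ᶠ y' in 𝓝[≠] y, y' ∈ u ∧ y ≠ y' := fun y hy =>
    (eventually_nhdsWithin_of_eventually_nhds hy).and
      (eventually_mem_nhdsWithin.mono fun _ => Ne.symm)
  rw [dist_eq_norm]
  refine (le_of_tendsto ((hasDerivAt_iff_tendsto_slope.1 (hdiff x hxS)).sub_const _).norm
    ((hslope x hx).mono fun x' hx' => ?_)).trans_lt (half_lt_self hε)
  exact le_of_tendsto ((hasDerivAt_iff_tendsto_slope.1 (hdiff t ht)).const_sub _).norm
    ((hslope t hu).mono fun t' ht' => h x (mem_of_mem_nhds hx) x' hx'.1 t (mem_of_mem_nhds hu)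
      t' ht'.1 hx'.2 ht'.2)

lemma hasDerivAt_of_mixed {a b β : ℝ × ℝ → ℝ} {α : ℝ → ℝ} {t ρ : ℝ}
    (ha : ∀ᶠ p in 𝓝 (t, ρ), HasDerivAt (fun x => a (p.1, x)) (b p) p.2)
    (hb : ∀ᶠ p in 𝓝 (t, ρ), HasDerivAt (fun s => b (s, p.2)) (β p) p.1)
    (hβ : ContinuousAt β (t, ρ))
    (hα : ∀ᶠ x in 𝓝 ρ, HasDerivAt (fun s => a (s, x)) (α x) t) : HasDerivAt α (β (t, ρ)) ρ := by
  rw [hasDerivAt_iff_isLittleO, Asymptotics.isLittleO_iff]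
  intro ε hε
  obtain ⟨δ, hδ, hball⟩ := Metric.eventually_nhds_iff_ball.1
    ((ha.and hb).and (hβ.eventually (Metric.closedBall_mem_nhds _ hε)))
  rw [← ball_prod_same] at hball
  have hρ : ρ ∈ Metric.ball ρ δ := Metric.mem_ball_self hδ
  have ht : t ∈ Metric.ball t δ := Metric.mem_ball_self hδ
  filter_upwards [hα, Metric.ball_mem_nhds ρ hδ] with x hx hxδ
  have hbox : ∀ s ∈ Metric.ball t δ, ‖(a (s, x) - a (s, ρ) - s * ((x - ρ) * β (t, ρ))) -
      (a (t, x) - a (t, ρ) - t * ((x - ρ) * β (t, ρ)))‖ ≤ ε * ‖x - ρ‖ * ‖s - t‖ := by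
    intro s hs
    have hbs : ∀ y ∈ Metric.ball ρ δ, ‖b (s, y) - b (t, y) - (s - t) * β (t, ρ)‖ ≤ ε * ‖s - t‖ := by
      intro y hy
      have hmv := (convex_ball t δ).norm_image_sub_le_of_norm_hasDerivWithin_le
        (f := fun s => b (s, y) - s * β (t, ρ)) (f' := fun s => β (s, y) - 1 * β (t, ρ)) (C := ε)
        (fun q hq => ((hball (q, y) ⟨hq, hy⟩).1.2.sub
          ((hasDerivAt_id q).mul_const _)).hasDerivWithinAt)
        (fun q hq => by simpa [dist_eq_norm] using (hball (q, y) ⟨hq, hy⟩).2) ht hs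
      simpa only [sub_mul, sub_sub_sub_comm] using hmv
    have hmv := (convex_ball ρ δ).norm_image_sub_le_of_norm_hasDerivWithin_le
      (f := fun y => a (s, y) - a (t, y) - y * ((s - t) * β (t, ρ)))
      (f' := fun y => b (s, y) - b (t, y) - 1 * ((s - t) * β (t, ρ))) (C := ε * ‖s - t‖)
      (fun y hy => (((hball (s, y) ⟨hs, hy⟩).1.1.sub (hball (t, y) ⟨ht, hy⟩).1.1).sub
        ((hasDerivAt_id y).mul_const _)).hasDerivWithinAt)
      (fun y hy => by simpa using hbs y hy) hρ hxδ
    convert hmv using 1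
    · congr 1; ring
    · ring
  have hderiv : HasDerivAt (fun s => a (s, x) - a (s, ρ) - s * ((x - ρ) * β (t, ρ)))
      (α x - α ρ - (x - ρ) * β (t, ρ)) t := by
    exact ((hx.sub hα.self_of_nhds).sub ((hasDerivAt_id t).mul_const _)).congr_deriv (by simp)
  simpa using hderiv.hasFDerivAt.le_of_lip' (by positivity)
    (eventually_of_mem (Metric.ball_mem_nhds t hδ) hbox)

lemma exists_abs_sub_sub_deriv_mul_le {f : ℝ → ℝ} (hf : ContDiff ℝ 1 f) {K : Set ℝ}
    (hK : IsCompact K) {ω : ℝ} (hω : 0 < ω) :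
    ∃ δ > 0, ∀ u ∈ K, ∀ x ∈ Metric.ball u δ, ∀ y ∈ Metric.ball u δ,
      |f x - f y - deriv f u * (x - y)| ≤ ω * |x - y| := by
  obtain ⟨δ, hδ, hunif⟩ := Metric.mem_uniformity_dist.1
    (hK.uniformContinuousAt_of_continuousAt (deriv f)
      (fun u _ => (hf.continuous_deriv le_rfl).continuousAt) (Metric.dist_mem_uniformity hω))
  refine ⟨δ, hδ, fun u hu x hx y hy => ?_⟩
  have hmv := (convex_ball u δ).norm_image_sub_le_of_norm_hasDerivWithin_le
    (f := fun v => f v - deriv f u * v) (f' := fun v => deriv f v - deriv f u * 1) (C := ω)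
    (fun v _ => ((hf.differentiable one_ne_zero v).hasDerivAt.sub
      ((hasDerivAt_id v).const_mul _)).hasDerivWithinAt)
    (fun v hv => ?_) hy hx
  · simpa [Real.norm_eq_abs, mul_sub, sub_sub_sub_comm] using hmv
  · have h := hunif (a := u) (b := v) (by rw [dist_comm]; exact hv) hu
    rw [mul_one, ← dist_eq_norm, dist_comm]
    exact h.le

section Partials

variable {E : Type*} [NormedAddCommGroup E] [NormedSpace ℝ E]

/-- The differential `(x, y) ↦ x • a + y • b` of a map on `ℝ × ℝ` whose partial derivatives are
`a` and `b`. -/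
noncomputable def ofPartials (a b : E) : ℝ × ℝ →L[ℝ] E :=
  (ContinuousLinearMap.toSpanSingleton ℝ a).coprod (ContinuousLinearMap.toSpanSingleton ℝ b)

lemma ofPartials_apply (a b : E) (p : ℝ × ℝ) : ofPartials a b p = p.1 • a + p.2 • b := rfl

lemma continuous_toSpanSingleton :
    Continuous (ContinuousLinearMap.toSpanSingleton ℝ : E → ℝ →L[ℝ] E) :=
  (ContinuousLinearMap.toSpanSingletonCLE (𝕜 := ℝ) (E := E)).continuous

lemma continuous_ofPartials : Continuous fun p : E × E => ofPartials p.1 p.2 :=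
  ((continuous_toSpanSingleton.comp continuous_fst).clm_comp
    (continuous_const (y := ContinuousLinearMap.fst ℝ ℝ ℝ))).add
      ((continuous_toSpanSingleton.comp continuous_snd).clm_comp
        (continuous_const (y := ContinuousLinearMap.snd ℝ ℝ ℝ)))

lemma hasStrictFDerivAt_of_partials {F F₁ F₂ : ℝ × ℝ → E} {p : ℝ × ℝ}
    (h₁ : ∀ᶠ q in 𝓝 p, HasDerivAt (fun x => F (x, q.2)) (F₁ q) q.1)
    (h₂ : ∀ᶠ q in 𝓝 p, HasDerivAt (fun y => F (q.1, y)) (F₂ q) q.2)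
    (hF₁ : ContinuousAt F₁ p) (hF₂ : ContinuousAt F₂ p) :
    HasStrictFDerivAt F (ofPartials (F₁ p) (F₂ p)) p :=
  hasStrictFDerivAt_uncurry_coprod (f := fun x y => F (x, y))
    (f₁ := fun x y => ContinuousLinearMap.toSpanSingleton ℝ (F₁ (x, y)))
    (f₂ := fun x y => ContinuousLinearMap.toSpanSingleton ℝ (F₂ (x, y)))
    (h₁.mono fun _ h => h.hasFDerivAt) (h₂.mono fun _ h => h.hasFDerivAt)
    (continuous_toSpanSingleton.continuousAt.comp hF₁)
    (continuous_toSpanSingleton.continuousAt.comp hF₂)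

lemma contDiffOn_one_of_partials {F F₁ F₂ : ℝ × ℝ → E} {S : Set (ℝ × ℝ)} (hS : IsOpen S)
    (h₁ : ∀ p ∈ S, HasDerivAt (fun x => F (x, p.2)) (F₁ p) p.1)
    (h₂ : ∀ p ∈ S, HasDerivAt (fun y => F (p.1, y)) (F₂ p) p.2)
    (hF₁ : ContinuousOn F₁ S) (hF₂ : ContinuousOn F₂ S) : ContDiffOn ℝ 1 F S := by
  intro p hp
  refine (contDiffAt_one_iff.2 ⟨fun q => ofPartials (F₁ q) (F₂ q), S, hS.mem_nhds hp,
    continuous_ofPartials.comp_continuousOn (hF₁.prodMk hF₂), fun q hq => ?_⟩).contDiffWithinAt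
  exact (hasStrictFDerivAt_of_partials (eventually_of_mem (hS.mem_nhds hq) h₁)
    (eventually_of_mem (hS.mem_nhds hq) h₂) (hF₁.continuousAt (hS.mem_nhds hq))
    (hF₂.continuousAt (hS.mem_nhds hq))).hasFDerivAt

lemma exists_continuousLinearEquiv_eq_ofPartials {u v : ℝ × ℝ} (h : u.1 * v.2 - u.2 * v.1 ≠ 0) :
    ∃ e : (ℝ × ℝ) ≃L[ℝ] ℝ × ℝ, (e : ℝ × ℝ →L[ℝ] ℝ × ℝ) = ofPartials u v := by
  have hinj : Function.Injective (ofPartials u v).toLinearMap := by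
    refine (injective_iff_map_eq_zero _).2 fun p hp => ?_
    have h₁ : p.1 * u.1 + p.2 * v.1 = 0 := congrArg Prod.fst hp
    have h₂ : p.1 * u.2 + p.2 * v.2 = 0 := congrArg Prod.snd hp
    have hx : p.1 * (u.1 * v.2 - u.2 * v.1) = 0 := by linear_combination v.2 * h₁ - v.1 * h₂
    have hy : p.2 * (u.1 * v.2 - u.2 * v.1) = 0 := by linear_combination u.1 * h₂ - u.2 * h₁
    exact Prod.ext ((mul_eq_zero_iff_right h).1 hx) ((mul_eq_zero_iff_right h).1 hy)
  exact ⟨(LinearEquiv.ofInjectiveEndo _ hinj).toContinuousLinearEquiv, by ext <;> simp⟩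

lemma hasDerivAt_of_apply_eq_const {h : ℝ × ℝ → ℝ} {R : ℝ → ℝ} {t a b : ℝ}
    (hh : HasStrictFDerivAt h (ofPartials a b) (t, R t)) (hb : b ≠ 0)
    (hR : ContinuousAt R t) (hconst : ∀ᶠ s in 𝓝 t, h (s, R s) = h (t, R t)) :
    HasDerivAt R (-a / b) t := by
  let e := ContinuousLinearEquiv.unitsEquivAut ℝ (Units.mk0 b hb)
  have he : ofPartials a b ∘L .inr ℝ ℝ ℝ = e := by ext; simp [ofPartials_apply, e]
  have hinv : (ofPartials a b ∘L .inr ℝ ℝ ℝ).IsInvertible := ⟨e, he.symm⟩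
  have hψ := hh.hasStrictFDerivAt_implicitFunctionOfProdDomain hinv
  have hiff := (continuousAt_id.prodMk hR).eventually
    (hh.eventually_apply_eq_iff_implicitFunctionOfProdDomain hinv)
  refine (hψ.hasFDerivAt.hasDerivAt.congr_of_eventuallyEq ?_).congr_deriv ?_
  · filter_upwards [hiff, hconst] with s hs hc using (hs.1 hc).symm
  · rw [he]
    simp [ofPartials_apply, e, div_eq_mul_inv]

end Partials

lemma contDiffOn_invFunOn {𝕜 E F : Type*} [RCLike 𝕜] [NormedAddCommGroup E] [NormedSpace 𝕜 E]
    [CompleteSpace E] [NormedAddCommGroup F] [NormedSpace 𝕜 F] [Nonempty E] {n : WithTop ℕ∞}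
    {g : E → F} {S : Set E} (hS : IsOpen S) (hinj : InjOn g S) (hg : ContDiffOn 𝕜 n g S)
    (hn : n ≠ 0)
    (hg' : ∀ p ∈ S, ∃ e : E ≃L[𝕜] F, HasFDerivAt g (e : E →L[𝕜] F) p) :
    ContDiffOn 𝕜 n (Function.invFunOn g S) (g '' S) := by
  rintro _ ⟨p, hp, rfl⟩
  have hgp := hg.contDiffAt (hS.mem_nhds hp)
  obtain ⟨e, he⟩ := hg' p hp
  have hloc := hgp.to_localInverse he hn
  have hmem : ∀ᶠ q in 𝓝 (g p), hgp.localInverse he hn q ∈ S :=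
    hloc.continuousAt.eventually
      ((hgp.localInverse_apply_image he hn).symm ▸ hS.mem_nhds hp)
  have hright := (hgp.hasStrictFDerivAt' he hn).eventually_right_inverse
  refine (hloc.congr_of_eventuallyEq ?_).contDiffWithinAt
  filter_upwards [hmem, hright] with q hq hgq
  have hinv := hinj.leftInvOn_invFunOn hq
  rwa [show g (hgp.localInverse he hn q) = q from hgq] at hinv

end Calculus

section Profiles

open Filter Topology

variable {f u : ℝ → ℝ} {r ρ : ℝ}

namespace IsEvenSol

lemma hasDerivAt (h : IsEvenSol f u) (hρ : ρ ∈ Ioo (-π) π) : HasDerivAt u (deriv u ρ) ρ :=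
  ((h.2.1.contDiffAt (isOpen_Ioo.mem_nhds hρ)).differentiableAt two_ne_zero).hasDerivAt

lemma contDiffOn_deriv (h : IsEvenSol f u) : ContDiffOn ℝ 1 (deriv u) (Ioo (-π) π) :=
  h.2.1.deriv_of_isOpen isOpen_Ioo (by norm_num)

lemma hasDerivAt_deriv (h : IsEvenSol f u) (hρ : ρ ∈ Ioo (-π) π) :
    HasDerivAt (deriv u) (deriv (deriv u) ρ) ρ :=
  ((h.contDiffOn_deriv.contDiffAt (isOpen_Ioo.mem_nhds hρ)).differentiableAt
    one_ne_zero).hasDerivAt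

lemma continuousAt_deriv_deriv (h : IsEvenSol f u) (hρ : ρ ∈ Ioo (-π) π) :
    ContinuousAt (deriv (deriv u)) ρ :=
  ((contDiffOn_one_iff_deriv_of_isOpen isOpen_Ioo).1 h.contDiffOn_deriv).2.continuousAt
    (isOpen_Ioo.mem_nhds hρ)

lemma apply_abs (h : IsEvenSol f u) (hρ : ρ ∈ Ioo (-π) π) : u |ρ| = u ρ := by
  rcases abs_choice ρ with habs | habs <;> rw [habs]
  exact h.1 ρ hρ

lemma deriv_neg (h : IsEvenSol f u) (hρ : ρ ∈ Ioo (-π) π) : deriv u (-ρ) = -deriv u ρ := by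
  have heven : (fun x => u (-x)) =ᶠ[𝓝 ρ] u := eventually_of_mem (isOpen_Ioo.mem_nhds hρ) h.1
  rw [← heven.deriv_eq, deriv_comp_neg, neg_neg]

lemma deriv_deriv_neg (h : IsEvenSol f u) (hρ : ρ ∈ Ioo (-π) π) :
    deriv (deriv u) (-ρ) = deriv (deriv u) ρ := by
  have hodd : (fun x => deriv u (-x)) =ᶠ[𝓝 ρ] fun x => -deriv u x :=
    eventually_of_mem (isOpen_Ioo.mem_nhds hρ) fun _ => h.deriv_neg
  have hderiv := hodd.deriv_eq
  rwa [deriv_comp_neg, deriv.fun_neg, neg_inj] at hderiv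

lemma deriv_zero (h : IsEvenSol f u) : deriv u 0 = 0 := by
  have hodd := h.deriv_neg ⟨neg_lt_zero.2 pi_pos, pi_pos⟩
  rw [neg_zero] at hodd
  linarith

lemma deriv_deriv_eq (h : IsEvenSol f u) (hρ : ρ ∈ Ioo 0 π) :
    deriv (deriv u) ρ = -(cos ρ / sin ρ) * deriv u ρ + -f (u ρ) := by
  linarith [h.2.2 ρ ⟨by linarith [hρ.1, pi_pos], hρ.2⟩ hρ.1.ne']

lemma hasDerivAt_sin_mul_deriv (h : IsEvenSol f u) (hρ : ρ ∈ Ioo (-π) π) :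
    HasDerivAt (fun x => sin x * deriv u x) (-(sin ρ * f (u ρ))) ρ := by
  refine ((hasDerivAt_sin ρ).mul (h.hasDerivAt_deriv hρ)).congr_deriv ?_
  rcases eq_or_ne ρ 0 with rfl | hne
  · simp [h.deriv_zero]
  · have hsin : sin ρ ≠ 0 := sin_eq_zero_iff_of_lt_of_lt hρ.1 hρ.2 |>.not.2 hne
    have hode := h.2.2 ρ hρ hne
    field_simp at hode
    linarith

lemma abs_sin_mul_deriv_add_le (h : IsEvenSol f u) {m ε : ℝ} (hρ : ρ ∈ Ico 0 π)
    (hm : ∀ x ∈ Ico 0 ρ, |f (u x) - m| ≤ ε) :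
    |sin ρ * deriv u ρ + m * (1 - cos ρ)| ≤ ε * (1 - cos ρ) := by
  have hIcc : ∀ x ∈ Icc 0 ρ, x ∈ Ioo (-π) π := fun x hx =>
    ⟨by linarith [hx.1, pi_pos], by linarith [hx.2, hρ.2]⟩
  have hderiv : ∀ x ∈ Icc 0 ρ, HasDerivAt (fun x => sin x * deriv u x + m * (1 - cos x))
      (-(sin x * f (u x)) + m * sin x) x := fun x hx =>
    ((h.hasDerivAt_sin_mul_deriv (hIcc x hx)).add
      (((hasDerivAt_cos x).const_sub 1).const_mul m)).congr_deriv (by ring)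
  refine image_norm_le_of_norm_deriv_right_le_deriv_boundary (a := 0) (b := ρ)
    (B := fun x => ε * (1 - cos x)) (B' := fun x => ε * sin x)
    (fun x hx => (hderiv x hx).continuousAt.continuousWithinAt)
    (fun x hx => (hderiv x (Ico_subset_Icc_self hx)).hasDerivWithinAt) (by simp)
    (fun x => (((hasDerivAt_cos x).const_sub 1).const_mul ε).congr_deriv (by ring))
    (fun x hx => ?_) (right_mem_Icc.2 hρ.1)
  have hsin : 0 ≤ sin x := sin_nonneg_of_nonneg_of_le_pi hx.1 (by linarith [hx.2, hρ.2])
  calc |-(sin x * f (u x)) + m * sin x| = |f (u x) - m| * sin x := by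
        rw [← abs_of_nonneg hsin, ← abs_mul, abs_of_nonneg hsin, ← abs_neg]; ring_nf
    _ ≤ ε * sin x := by gcongr; exact hm x hx

lemma abs_deriv_deriv_add_le_of_pos (h : IsEvenSol f u) {m ε : ℝ} (hρ : ρ ∈ Ioo 0 (π / 2))
    (hm : ∀ x ∈ Icc 0 ρ, |f (u x) - m| ≤ ε) :
    |deriv (deriv u) ρ + m / (1 + cos ρ)| ≤ 2 * ε := by
  have hρπ : ρ ∈ Ioo 0 π := ⟨hρ.1, by linarith [hρ.2, pi_pos]⟩
  have hsin : 0 < sin ρ := sin_pos_of_mem_Ioo hρπ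
  have hcos : 0 < cos ρ := cos_pos_of_mem_Ioo ⟨by linarith [hρ.1, pi_pos], hρ.2⟩
  have hquot : |deriv u ρ / sin ρ + m / (1 + cos ρ)| ≤ ε / (1 + cos ρ) := by
    have hsq : 1 - cos ρ = sin ρ ^ 2 / (1 + cos ρ) := by
      rw [eq_div_iff (by positivity), sin_sq]; ring
    have hle := h.abs_sin_mul_deriv_add_le (Ioo_subset_Ico_self hρπ)
      fun x hx => hm x (Ico_subset_Icc_self hx)
    refine le_of_mul_le_mul_left (a := sin ρ ^ 2) ?_ (by positivity)
    calc sin ρ ^ 2 * |deriv u ρ / sin ρ + m / (1 + cos ρ)|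
        = |sin ρ * deriv u ρ + m * (1 - cos ρ)| := by
          rw [hsq, ← abs_of_pos (pow_pos hsin 2), ← abs_mul, abs_of_pos (pow_pos hsin 2)]
          congr 1; field_simp
      _ ≤ ε * (1 - cos ρ) := hle
      _ = sin ρ ^ 2 * (ε / (1 + cos ρ)) := by rw [hsq]; ring
  calc |deriv (deriv u) ρ + m / (1 + cos ρ)|
      = |-cos ρ * (deriv u ρ / sin ρ + m / (1 + cos ρ)) - (f (u ρ) - m)| := by
        rw [h.deriv_deriv_eq hρπ]; congr 1; field_simp; ring
    _ ≤ cos ρ * |deriv u ρ / sin ρ + m / (1 + cos ρ)| + |f (u ρ) - m| := by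
        refine (abs_sub _ _).trans_eq ?_
        rw [abs_mul, abs_neg, abs_of_pos hcos]
    _ ≤ cos ρ * (ε / (1 + cos ρ)) + ε := by gcongr; exact hm ρ (right_mem_Icc.2 hρ.1.le)
    _ ≤ 2 * ε := by
        have hε : 0 ≤ ε := (abs_nonneg _).trans (hm ρ (right_mem_Icc.2 hρ.1.le))
        have : cos ρ * (ε / (1 + cos ρ)) ≤ ε := by
          rw [mul_div_assoc', div_le_iff₀ (by positivity)]; nlinarith
        linarith

lemma deriv_deriv_zero (h : IsEvenSol f u) (hf : Continuous f) :
    deriv (deriv u) 0 = -f (u 0) / 2 := by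
  have h0 : (0 : ℝ) ∈ Ioo (-π) π := ⟨neg_lt_zero.2 pi_pos, pi_pos⟩
  have htendsto : Tendsto (fun ρ => |deriv (deriv u) ρ + f (u 0) / (1 + cos ρ)|) (𝓝[>] 0)
      (𝓝 |deriv (deriv u) 0 + f (u 0) / (1 + cos 0)|) := by
    have hdiv : ContinuousAt (fun ρ => f (u 0) / (1 + cos ρ)) 0 :=
      ContinuousAt.div (by fun_prop) (by fun_prop) (by norm_num)
    exact ((h.continuousAt_deriv_deriv h0).add hdiv).abs.tendsto.mono_left nhdsWithin_le_nhds
  have hle : |deriv (deriv u) 0 + f (u 0) / (1 + cos 0)| ≤ 0 := by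
    refine le_of_forall_pos_le_add fun ε hε => ?_
    obtain ⟨δ, hδ, hball⟩ := Metric.eventually_nhds_iff.1
      ((hf.continuousAt.comp (h.hasDerivAt h0).continuousAt).eventually
        (Metric.closedBall_mem_nhds _ (half_pos hε)))
    rw [zero_add]
    refine le_of_tendsto htendsto ?_
    filter_upwards [Ioo_mem_nhdsGT (lt_min hδ pi_div_two_pos)] with ρ hρ
    have hm := h.abs_deriv_deriv_add_le_of_pos (m := f (u 0)) (ε := ε / 2)
      ⟨hρ.1, hρ.2.trans_le (min_le_right _ _)⟩ fun x hx => hball (by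
        rw [Real.dist_0_eq_abs, abs_of_nonneg hx.1]
        exact hx.2.trans_lt (hρ.2.trans_le (min_le_left _ _)))
    linarith
  have hzero := abs_eq_zero.1 (hle.antisymm (abs_nonneg _))
  rw [cos_zero] at hzero
  linarith

lemma abs_deriv_deriv_add_le (h : IsEvenSol f u) (hf : Continuous f) {m ε : ℝ} (hρ : |ρ| < π / 2)
    (hm : ∀ x, |x| ≤ |ρ| → |f (u x) - m| ≤ ε) :
    |deriv (deriv u) ρ + m / (1 + cos ρ)| ≤ 2 * ε := by
  rcases eq_or_ne ρ 0 with rfl | hne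
  · have h0 := hm 0 le_rfl
    rw [h.deriv_deriv_zero hf, cos_zero, abs_sub_comm] at *
    rw [show -f (u 0) / 2 + m / (1 + 1) = (m - f (u 0)) / 2 by ring, abs_div, abs_two]
    linarith [abs_nonneg (m - f (u 0))]
  · have habs := h.abs_deriv_deriv_add_le_of_pos ⟨abs_pos.2 hne, hρ⟩
      fun x hx => hm x (by rw [abs_of_nonneg hx.1]; exact hx.2)
    have hρπ : ρ ∈ Ioo (-π) π := abs_lt.1 (by linarith [pi_pos])
    have heven : deriv (deriv u) |ρ| = deriv (deriv u) ρ := by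
      rcases abs_choice ρ with hc | hc <;> rw [hc]
      exact h.deriv_deriv_neg hρπ
    rwa [cos_abs, heven] at habs

end IsEvenSol

/-- `u` is an even solution, positive at `0`, whose smallest positive zero is `r ∈ (0, π)`. -/
structure IsProfile (f u : ℝ → ℝ) (r : ℝ) : Prop where
  isEvenSol : IsEvenSol f u
  apply_zero_pos : 0 < u 0
  radius_mem : r ∈ Ioo 0 π
  apply_radius : u r = 0
  apply_ne_zero : ∀ ρ ∈ Ioo 0 r, u ρ ≠ 0

namespace IsProfile

lemma mem_Ioo_pi (h : IsProfile f u r) (hρ : ρ ∈ Icc (-r) r) : ρ ∈ Ioo (-π) π :=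
  ⟨by linarith [hρ.1, h.radius_mem.2], by linarith [hρ.2, h.radius_mem.2]⟩

lemma continuousOn (h : IsProfile f u r) : ContinuousOn u (Icc 0 r) := fun _ hρ =>
  (h.isEvenSol.hasDerivAt (h.mem_Ioo_pi
    ⟨by linarith [hρ.1, h.radius_mem.1], hρ.2⟩)).continuousAt.continuousWithinAt

lemma apply_pos (h : IsProfile f u r) (hρ : ρ ∈ Ioo (-r) r) : 0 < u ρ := by
  suffices ∀ x ∈ Ico 0 r, 0 < u x by
    rw [← h.isEvenSol.apply_abs (h.mem_Ioo_pi (Ioo_subset_Icc_self hρ))]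
    exact this _ ⟨abs_nonneg ρ, abs_lt.2 hρ⟩
  intro x hx
  by_contra! hle
  obtain ⟨y, hy, hy0⟩ := intermediate_value_Icc' hx.1
    (h.continuousOn.mono (Icc_subset_Icc_right hx.2.le)) ⟨hle, h.apply_zero_pos.le⟩
  rcases hy.1.eq_or_lt with rfl | hpos
  · exact h.apply_zero_pos.ne' hy0
  · exact h.apply_ne_zero y ⟨hpos, hy.2.trans_lt hx.2⟩ hy0

lemma deriv_neg (h : IsProfile f u r) (hpos : ∀ x > 0, 0 < f x) (hρ : ρ ∈ Ioc 0 r) :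
    deriv u ρ < 0 := by
  have hIcc : ∀ x ∈ Icc 0 r, x ∈ Ioo (-π) π := fun x hx =>
    h.mem_Ioo_pi ⟨by linarith [hx.1, h.radius_mem.1], hx.2⟩
  have hanti : StrictAntiOn (fun x => sin x * deriv u x) (Icc 0 r) := by
    refine strictAntiOn_of_deriv_neg (convex_Icc 0 r) (fun x hx =>
      (h.isEvenSol.hasDerivAt_sin_mul_deriv (hIcc x hx)).continuousAt.continuousWithinAt)
      fun x hx => ?_
    rw [interior_Icc] at hx
    rw [(h.isEvenSol.hasDerivAt_sin_mul_deriv (hIcc x (Ioo_subset_Icc_self hx))).deriv]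
    exact neg_neg_of_pos (mul_pos (sin_pos_of_mem_Ioo ⟨hx.1, hx.2.trans h.radius_mem.2⟩)
      (hpos _ (h.apply_pos ⟨by linarith [hx.1, hx.2], hx.2⟩)))
  have hlt := hanti (left_mem_Icc.2 h.radius_mem.1.le) (Ioc_subset_Icc_self hρ) hρ.1
  simp only [sin_zero, zero_mul] at hlt
  exact (pos_iff_neg_of_mul_neg hlt).1 (sin_pos_of_mem_Ioo ⟨hρ.1, hρ.2.trans_lt h.radius_mem.2⟩)

lemma strictAntiOn (h : IsProfile f u r) (hpos : ∀ x > 0, 0 < f x) :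
    StrictAntiOn u (Icc 0 r) := by
  refine strictAntiOn_of_deriv_neg (convex_Icc 0 r) h.continuousOn fun x hx => ?_
  rw [interior_Icc] at hx
  exact h.deriv_neg hpos (Ioo_subset_Ioc_self hx)

lemma apply_mem_Icc (h : IsProfile f u r) (hpos : ∀ x > 0, 0 < f x) (hρ : ρ ∈ Icc 0 r) :
    u ρ ∈ Icc 0 (u 0) := by
  have hanti := (h.strictAntiOn hpos).antitoneOn
  exact ⟨h.apply_radius ▸ hanti hρ (right_mem_Icc.2 h.radius_mem.1.le) hρ.2,
    hanti (left_mem_Icc.2 h.radius_mem.1.le) hρ hρ.1⟩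

end IsProfile

end Profiles

section Families

open Filter Topology

lemma cos_div_sin_le_cos_div_sin {x y : ℝ} (hx : 0 < x) (hxy : x ≤ y) (hy : y < π) :
    cos y / sin y ≤ cos x / sin x := by
  have hsin : 0 ≤ sin (y - x) := sin_nonneg_of_nonneg_of_le_pi (by linarith) (by linarith)
  rw [sin_sub] at hsin
  rw [div_le_div_iff₀ (sin_pos_of_pos_of_lt_pi (hx.trans_le hxy) hy)
    (sin_pos_of_pos_of_lt_pi hx (hxy.trans_lt hy))]
  linarith

lemma neg_abs_le_cos_div_sin {x y : ℝ} (hx : 0 < x) (hxy : x ≤ y) (hy : y < π) :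
    -|cos y / sin y| ≤ cos x / sin x :=
  (neg_abs_le _).trans (cos_div_sin_le_cos_div_sin hx hxy hy)

/-- The map `F(t, ρ) = (U_t(ρ), U_t'(ρ))`. -/
noncomputable def phaseMap (U : ℝ → ℝ → ℝ) (p : ℝ × ℝ) : ℝ × ℝ := (U p.1 p.2, deriv (U p.1) p.2)

/-- The domain `Δ` of the phase map. -/
def profileDomain (r : ℝ → ℝ) : Set (ℝ × ℝ) := {p | 0 < p.1 ∧ -r p.1 < p.2 ∧ p.2 < r p.1}

/-- For every `t > 0`, `U t` is the profile `U_t` with `U_t(0) = t`, of radius `r t`. -/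
def IsProfileFamily (f : ℝ → ℝ) (U : ℝ → ℝ → ℝ) (r : ℝ → ℝ) : Prop :=
  ∀ t > 0, IsProfile f (U t) (r t) ∧ U t 0 = t

variable {f : ℝ → ℝ} {U : ℝ → ℝ → ℝ} {r : ℝ → ℝ} {s s' t ρ R : ℝ}

lemma slope_phaseMap : slope (fun q => phaseMap U (q, ρ)) s s' =
    (slope (fun q => U q ρ) s s', slope (fun q => deriv (U q) ρ) s s') := rfl

namespace IsProfileFamily

lemma isProfile (h : IsProfileFamily f U r) (ht : 0 < t) : IsProfile f (U t) (r t) := (h t ht).1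

lemma isEvenSol (h : IsProfileFamily f U r) (ht : 0 < t) : IsEvenSol f (U t) :=
  (h.isProfile ht).isEvenSol

lemma radius_mem (h : IsProfileFamily f U r) (ht : 0 < t) : r t ∈ Ioo 0 π :=
  (h.isProfile ht).radius_mem

lemma apply_mem_Icc (h : IsProfileFamily f U r) (hpos : ∀ x > 0, 0 < f x) (ht : 0 < t)
    (hρ : ρ ∈ Icc 0 (r t)) : U t ρ ∈ Icc 0 t := by
  have hmem := (h.isProfile ht).apply_mem_Icc hpos hρ
  rwa [(h t ht).2] at hmem

lemma slope_phaseMap_zero (h : IsProfileFamily f U r) (hs : 0 < s) (hs' : 0 < s') (hne : s ≠ s') :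
    slope (fun q => phaseMap U (q, 0)) s s' = (1, 0) := by
  simp [slope_def_module, phaseMap, (h s hs).2, (h s' hs').2, (h.isEvenSol hs).deriv_zero,
    (h.isEvenSol hs').deriv_zero, inv_mul_cancel₀ (sub_ne_zero.2 hne.symm)]

lemma slope_phaseMap_neg (h : IsProfileFamily f U r) (hs : 0 < s) (hs' : 0 < s')
    (hρ : ρ ∈ Ioo (-π) π) : slope (fun q => phaseMap U (q, -ρ)) s s' =
      (slope (fun q => U q ρ) s s', -slope (fun q => deriv (U q) ρ) s s') := by
  simp only [slope_phaseMap, slope_def_field, (h.isEvenSol hs).1 ρ hρ, (h.isEvenSol hs').1 ρ hρ,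
    (h.isEvenSol hs).deriv_neg hρ, (h.isEvenSol hs').deriv_neg hρ]
  ring_nf

lemma hasDerivAt_slope (h : IsProfileFamily f U r) (hs : 0 < s) (hs' : 0 < s')
    (hρ : ρ ∈ Ioo (-π) π) : HasDerivAt (fun x => slope (fun q => U q x) s s')
      (slope (fun q => deriv (U q) ρ) s s') ρ :=
  (((h.isEvenSol hs').hasDerivAt hρ).sub ((h.isEvenSol hs).hasDerivAt hρ)).const_mul _

lemma hasDerivAt_slope_deriv (h : IsProfileFamily f U r) (hs : 0 < s) (hs' : 0 < s')
    (hρ : ρ ∈ Ioo 0 π) : HasDerivAt (fun x => slope (fun q => deriv (U q) x) s s')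
      (-(cos ρ / sin ρ) * slope (fun q => deriv (U q) ρ) s s' +
        -slope (fun q => f (U q ρ)) s s') ρ := by
  have hρπ : ρ ∈ Ioo (-π) π := ⟨by linarith [hρ.1, pi_pos], hρ.2⟩
  refine ((((h.isEvenSol hs').hasDerivAt_deriv hρπ).sub
    ((h.isEvenSol hs).hasDerivAt_deriv hρπ)).const_mul (s' - s)⁻¹).congr_deriv ?_
  rw [(h.isEvenSol hs).deriv_deriv_eq hρ, (h.isEvenSol hs').deriv_deriv_eq hρ]
  simp only [slope_def_field]
  ring

lemma continuousOn_slope (h : IsProfileFamily f U r) (hs : 0 < s) (hs' : 0 < s') (hR : R < π) :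
    ContinuousOn (fun x => slope (fun q => U q x) s s') (Icc 0 R) := fun x hx =>
  (h.hasDerivAt_slope hs hs' ⟨by linarith [hx.1, pi_pos],
    hx.2.trans_lt hR⟩).continuousAt.continuousWithinAt

lemma continuousOn_slope_deriv (h : IsProfileFamily f U r) (hs : 0 < s) (hs' : 0 < s')
    (hR : R < π) : ContinuousOn (fun x => slope (fun q => deriv (U q) x) s s') (Icc 0 R) := by
  have hsub : Icc 0 R ⊆ Ioo (-π) π := fun x hx =>
    ⟨by linarith [hx.1, pi_pos], hx.2.trans_lt hR⟩
  exact (((h.isEvenSol hs').contDiffOn_deriv.continuousOn.mono hsub).sub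
    ((h.isEvenSol hs).contDiffOn_deriv.continuousOn.mono hsub)).const_smul (s' - s)⁻¹

lemma exists_norm_slope_le (h : IsProfileFamily f U r) (hf : ContDiff ℝ 1 f)
    (hpos : ∀ x > 0, 0 < f x) (M : ℝ) (hR : R < π) :
    ∃ C ≥ 0, ∀ s ∈ Ioc 0 M, ∀ s' ∈ Ioc 0 M, ∀ ρ ∈ Icc 0 R, ρ ≤ r s → ρ ≤ r s' →
      ‖slope (fun q => phaseMap U (q, ρ)) s s'‖ ≤ C := by
  obtain ⟨L, hL⟩ := hf.contDiffOn.exists_lipschitzOnWith one_ne_zero (convex_Icc 0 M) isCompact_Icc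
  set κ := |cos R / sin R|
  refine ⟨2 * exp ((2 * κ + L + 2) * (R - 0)) * (‖((1 : ℝ), (0 : ℝ))‖ + 0), by positivity,
    fun s hs s' hs' ρ hρ hρs hρs' => ?_⟩
  rcases eq_or_ne s s' with rfl | hne
  · rw [slope_same, norm_zero]; positivity
  have hρπ : ρ < π := hρ.2.trans_lt hR
  have hslope := norm_le_of_damped (κ := κ) (A := L) (abs_nonneg _) L.coe_nonneg le_rfl
    (h.continuousOn_slope hs.1 hs'.1 hρπ) (h.continuousOn_slope_deriv hs.1 hs'.1 hρπ)
    (fun x hx => h.hasDerivAt_slope hs.1 hs'.1 ⟨by linarith [hx.1, pi_pos], hx.2.trans hρπ⟩)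
    (fun x hx => h.hasDerivAt_slope_deriv hs.1 hs'.1 ⟨hx.1, hx.2.trans hρπ⟩)
    (fun x hx => neg_abs_le_cos_div_sin hx.1 (hx.2.le.trans hρ.2) hR)
    (fun x hx => ?_) ρ (right_mem_Icc.2 hρ.1)
  · simp only [← slope_phaseMap, h.slope_phaseMap_zero hs.1 hs'.1 hne] at hslope
    refine hslope.trans ?_
    gcongr
    exact hρ.2
  · have hmem : ∀ q ∈ Ioc 0 M, ρ ≤ r q → U q x ∈ Icc 0 M := fun q hq hρq =>
      Icc_subset_Icc_right hq.2 (h.apply_mem_Icc hpos hq.1 ⟨hx.1.le, hx.2.le.trans hρq⟩)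
    have hLx := hL.dist_le_mul _ (hmem s' hs' hρs') _ (hmem s hs hρs)
    rw [abs_neg, add_zero, slope_def_field, slope_def_field, abs_div, abs_div, ← mul_div_assoc]
    gcongr
    exact hLx

lemma exists_norm_phaseMap_sub_le (h : IsProfileFamily f U r) (hf : ContDiff ℝ 1 f)
    (hpos : ∀ x > 0, 0 < f x) (M : ℝ) (hR : R < π) :
    ∃ C, ∀ s ∈ Ioc 0 M, ∀ s' ∈ Ioc 0 M, ∀ ρ ∈ Icc 0 R, ρ ≤ r s → ρ ≤ r s' →
      ‖phaseMap U (s', ρ) - phaseMap U (s, ρ)‖ ≤ C * |s' - s| := by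
  obtain ⟨C, -, hslope⟩ := h.exists_norm_slope_le hf hpos M hR
  refine ⟨C, fun s hs s' hs' ρ hρ hρs hρs' => ?_⟩
  rw [← vsub_eq_sub, ← sub_smul_slope (fun q => phaseMap U (q, ρ)) s s', norm_smul, mul_comm,
    norm_eq_abs]
  gcongr
  exact hslope s hs s' hs' ρ hρ hρs hρs'

lemma eventually_lt_radius (h : IsProfileFamily f U r) (hf : ContDiff ℝ 1 f)
    (hpos : ∀ x > 0, 0 < f x) (ht : 0 < t) (hR : R ∈ Ico 0 (r t)) :
    ∀ᶠ s in 𝓝 t, 0 < s ∧ R < r s := by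
  obtain ⟨C, hLip⟩ := h.exists_norm_phaseMap_sub_le hf hpos (t + 1)
    (hR.2.trans (h.radius_mem ht).2)
  have hUR : 0 < U t R := (h.isProfile ht).apply_pos ⟨by linarith [hR.1, hR.2], hR.2⟩
  have hclose : ∀ᶠ s in 𝓝 t, C * |t - s| < U t R :=
    Continuous.tendsto' (by fun_prop) t 0 (by simp) |>.eventually_lt_const hUR
  filter_upwards [Ioo_mem_nhds ht (lt_add_one t), hclose] with s hs hsC
  refine ⟨hs.1, ?_⟩
  by_contra! hle
  have hrs := h.radius_mem hs.1
  have hanti : U t R ≤ U t (r s) := ((h.isProfile ht).strictAntiOn hpos).antitoneOn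
    ⟨hrs.1.le, hle.trans hR.2.le⟩ ⟨hR.1, hR.2.le⟩ hle
  have hdist := (norm_fst_le _).trans (hLip s (Ioo_subset_Ioc_self hs) t ⟨ht, by linarith⟩ (r s)
    ⟨hrs.1.le, hle⟩ le_rfl (hle.trans hR.2.le))
  simp only [phaseMap, Prod.fst_sub, (h.isProfile hs.1).apply_radius, sub_zero] at hdist
  linarith [le_abs_self (U t (r s)), norm_eq_abs (U t (r s))]

end IsProfileFamily

end Families

section Variation

open Filter Topology

variable {f : ℝ → ℝ} {U : ℝ → ℝ → ℝ} {r : ℝ → ℝ} {t R : ℝ}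

namespace IsProfileFamily

lemma exists_mem_nhds_slope_comp_sub_le (h : IsProfileFamily f U r) (hf : ContDiff ℝ 1 f)
    (hpos : ∀ x > 0, 0 < f x) (ht : 0 < t) (hR : R ∈ Ico 0 (r t)) {ε : ℝ} (hε : 0 < ε) :
    ∃ u ∈ 𝓝 t, ∀ s ∈ u, 0 < s ∧ R < r s ∧ ∀ s' ∈ u, ∀ ρ ∈ Icc 0 R,
      |slope (fun q => f (U q ρ)) s s' - deriv f (U t ρ) * slope (fun q => U q ρ) s s'| ≤ ε := by
  have hRπ : R < π := hR.2.trans (h.radius_mem ht).2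
  obtain ⟨C, hC, hC'⟩ := h.exists_norm_slope_le hf hpos (t + 1) hRπ
  obtain ⟨C', hLip⟩ := h.exists_norm_phaseMap_sub_le hf hpos (t + 1) hRπ
  obtain ⟨δ, hδ, hfδ⟩ := exists_abs_sub_sub_deriv_mul_le hf (isCompact_Icc (a := 0) (b := t))
    (show 0 < ε / (C + 1) by positivity)
  have hclose : ∀ᶠ s in 𝓝 t, C' * |s - t| < δ :=
    Continuous.tendsto' (by fun_prop) t 0 (by simp) |>.eventually_lt_const hδ
  refine ⟨_, (h.eventually_lt_radius hf hpos ht hR).and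
    (hclose.and (eventually_lt_nhds (lt_add_one t))), fun s hs => ⟨hs.1.1, hs.1.2,
    fun s' hs' ρ hρ => ?_⟩⟩
  have hball : ∀ q, (0 < q ∧ R < r q) ∧ C' * |q - t| < δ ∧ q < t + 1 →
      U q ρ ∈ Metric.ball (U t ρ) δ := fun q hq =>
    (norm_fst_le _).trans_lt ((hLip t ⟨ht, by linarith⟩ q ⟨hq.1.1, hq.2.2.le⟩ ρ hρ
      (hρ.2.trans hR.2.le) (hρ.2.trans hq.1.2.le)).trans_lt hq.2.1)
  have hUt : U t ρ ∈ Icc 0 t := h.apply_mem_Icc hpos ht ⟨hρ.1, hρ.2.trans hR.2.le⟩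
  have hslope : |slope (fun q => U q ρ) s s'| ≤ C :=
    (norm_fst_le (slope (fun q => phaseMap U (q, ρ)) s s')).trans (hC' s ⟨hs.1.1, hs.2.2.le⟩ s'
      ⟨hs'.1.1, hs'.2.2.le⟩ ρ hρ (hρ.2.trans hs.1.2.le) (hρ.2.trans hs'.1.2.le))
  calc |slope (fun q => f (U q ρ)) s s' - deriv f (U t ρ) * slope (fun q => U q ρ) s s'|
      = |f (U s' ρ) - f (U s ρ) - deriv f (U t ρ) * (U s' ρ - U s ρ)| / |s' - s| := by
        rw [slope_def_field, slope_def_field, ← abs_div]; ring_nf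
    _ ≤ ε / (C + 1) * |U s' ρ - U s ρ| / |s' - s| := by
        gcongr; exact hfδ _ hUt _ (hball s' hs') _ (hball s hs)
    _ = ε / (C + 1) * |slope (fun q => U q ρ) s s'| := by
        rw [slope_def_field, abs_div, mul_div_assoc]
    _ ≤ ε / (C + 1) * C := by gcongr
    _ ≤ ε := by rw [div_mul_eq_mul_div, div_le_iff₀ (by positivity)]; nlinarith

lemma norm_slope_sub_le (h : IsProfileFamily f U r) {x x' y y' A B : ℝ} (hx : 0 < x) (hx' : 0 < x')
    (hy : 0 < y) (hy' : 0 < y') (hxx' : x ≠ x') (hyy' : y ≠ y') (hA : 0 ≤ A) (hB : 0 ≤ B)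
    (hR : R < π) (hbound : ∀ w ∈ Ioo 0 R,
      |slope (fun q => f (U q w)) y y' - slope (fun q => f (U q w)) x x'| ≤
        A * |slope (fun q => U q w) x x' - slope (fun q => U q w) y y'| + B) (hρ : ρ ∈ Icc 0 R) :
    ‖slope (fun q => phaseMap U (q, ρ)) x x' - slope (fun q => phaseMap U (q, ρ)) y y'‖ ≤
      2 * exp ((2 * |cos R / sin R| + A + 2) * R) * B := by
  have hdiff := norm_le_of_damped (abs_nonneg (cos R / sin R)) hA hB
    ((h.continuousOn_slope hx hx' hR).sub (h.continuousOn_slope hy hy' hR))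
    ((h.continuousOn_slope_deriv hx hx' hR).sub (h.continuousOn_slope_deriv hy hy' hR))
    (fun w hw => have hwπ : w ∈ Ioo (-π) π := ⟨by linarith [hw.1, pi_pos], hw.2.trans hR⟩
      (h.hasDerivAt_slope hx hx' hwπ).sub (h.hasDerivAt_slope hy hy' hwπ))
    (fun w hw => have hwπ : w ∈ Ioo 0 π := ⟨hw.1, hw.2.trans hR⟩
      ((h.hasDerivAt_slope_deriv hx hx' hwπ).sub
        (h.hasDerivAt_slope_deriv hy hy' hwπ)).congr_deriv (by simp only [Pi.sub_apply]; ring))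
    (fun w hw => neg_abs_le_cos_div_sin hw.1 hw.2.le hR) hbound ρ hρ
  have hzero : slope (fun q => phaseMap U (q, 0)) x x' -
      slope (fun q => phaseMap U (q, 0)) y y' = 0 := by
    rw [h.slope_phaseMap_zero hx hx' hxx', h.slope_phaseMap_zero hy hy' hyy', sub_self]
  simp only [Pi.sub_apply, ← Prod.mk_sub_mk, ← slope_phaseMap, hzero, norm_zero, zero_add,
    sub_zero] at hdiff
  exact hdiff

lemma exists_mem_nhds_norm_slope_sub_le (h : IsProfileFamily f U r) (hf : ContDiff ℝ 1 f)
    (hpos : ∀ x > 0, 0 < f x) (ht : 0 < t) (hR : R ∈ Ico 0 (r t)) {ε : ℝ} (hε : 0 < ε) :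
    ∃ u ∈ 𝓝 t, ∀ x ∈ u, ∀ x' ∈ u, ∀ y ∈ u, ∀ y' ∈ u, x ≠ x' → y ≠ y' → ∀ ρ ∈ Icc 0 R,
      ‖slope (fun q => phaseMap U (q, ρ)) x x' - slope (fun q => phaseMap U (q, ρ)) y y'‖ ≤ ε := by
  obtain ⟨A, hA⟩ := isCompact_Icc.exists_bound_of_continuousOn (s := Icc 0 t)
    (hf.continuous_deriv le_rfl).continuousOn
  set D := 2 * exp ((2 * |cos R / sin R| + A + 2) * R)
  have hD : 0 < D := by positivity
  obtain ⟨u, hu, huf⟩ := h.exists_mem_nhds_slope_comp_sub_le hf hpos ht hR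
    (show 0 < ε / D / 2 by positivity)
  refine ⟨u, hu, fun x hx x' hx' y hy y' hy' hxx' hyy' ρ hρ =>
    (h.norm_slope_sub_le (huf x hx).1 (huf x' hx').1 (huf y hy).1 (huf y' hy').1 hxx' hyy'
      ((norm_nonneg _).trans (hA 0 ⟨le_rfl, ht.le⟩)) (div_pos hε hD).le
      (hR.2.trans (h.radius_mem ht).2) (fun w hw => ?_) hρ).trans_eq (mul_div_cancel₀ ε hD.ne')⟩
  have hx1 := (huf x hx).2.2 x' hx' w (Ioo_subset_Icc_self hw)
  have hy1 := (huf y hy).2.2 y' hy' w (Ioo_subset_Icc_self hw)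
  have hAw := hA _ (h.apply_mem_Icc hpos ht ⟨hw.1.le, hw.2.le.trans hR.2.le⟩)
  set a := slope (fun q => U q w) x x'
  set b := slope (fun q => U q w) y y'
  set a' := slope (fun q => f (U q w)) x x'
  set b' := slope (fun q => f (U q w)) y y'
  set m := deriv f (U t w)
  calc |b' - a'| = |(b' - m * b) - (a' - m * a) - m * (a - b)| := by ring_nf
    _ ≤ |b' - m * b| + |a' - m * a| + |m * (a - b)| :=
      (abs_sub _ _).trans (add_le_add_left (abs_sub _ _) _)
    _ ≤ ε / D / 2 + ε / D / 2 + A * |a - b| := by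
      rw [abs_mul]; gcongr; exact hAw
    _ = A * |a - b| + ε / D := by ring

lemma exists_mem_nhds_norm_slope_sub_le_abs (h : IsProfileFamily f U r) (hf : ContDiff ℝ 1 f)
    (hpos : ∀ x > 0, 0 < f x) (ht : 0 < t) (hR : R ∈ Ico 0 (r t)) {ε : ℝ} (hε : 0 < ε) :
    ∃ u ∈ 𝓝 t, ∀ x ∈ u, ∀ x' ∈ u, ∀ y ∈ u, ∀ y' ∈ u, x ≠ x' → y ≠ y' → ∀ ρ ∈ Icc (-R) R,
      ‖slope (fun q => phaseMap U (q, ρ)) x x' - slope (fun q => phaseMap U (q, ρ)) y y'‖ ≤ ε := by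
  obtain ⟨u, hu, hslope⟩ := h.exists_mem_nhds_norm_slope_sub_le hf hpos ht hR hε
  refine ⟨u ∩ Ioi 0, inter_mem hu (Ioi_mem_nhds ht), fun x hx x' hx' y hy y' hy' hxx' hyy' ρ hρ =>
    ?_⟩
  have hRπ : R < π := hR.2.trans (h.radius_mem ht).2
  rcases le_total 0 ρ with h0 | h0
  · exact hslope x hx.1 x' hx'.1 y hy.1 y' hy'.1 hxx' hyy' ρ ⟨h0, hρ.2⟩
  · have hneg := hslope x hx.1 x' hx'.1 y hy.1 y' hy'.1 hxx' hyy' (-ρ)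
      ⟨by linarith, by linarith [hρ.1]⟩
    have hρπ : ρ ∈ Ioo (-π) π := ⟨by linarith [hρ.1], by linarith [hρ.2]⟩
    rwa [h.slope_phaseMap_neg hx.2 hx'.2 hρπ, h.slope_phaseMap_neg hy.2 hy'.2 hρπ,
      Prod.mk_sub_mk, neg_sub_neg, Prod.norm_mk, norm_sub_rev (slope (fun q => deriv (U q) ρ) y y'),
      ← Prod.norm_mk] at hneg

end IsProfileFamily

end Variation

section Curves

open Filter Topology

variable {f : ℝ → ℝ} {U : ℝ → ℝ → ℝ} {r : ℝ → ℝ} {t R : ℝ} {p : ℝ × ℝ}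

/-- The trajectory of `U t` in the phase plane over `[-R, R]`, as an element of a Banach space, so
that smooth dependence on `t` uniformly in `ρ` is smoothness of a single curve. The default value
`0` is taken only when the trajectory is discontinuous. -/
noncomputable def phaseCurve (U : ℝ → ℝ → ℝ) (R t : ℝ) : C(Icc (-R) R, ℝ × ℝ) :=
  ContinuousMap.mkD ((Icc (-R) R).domRestrict fun ρ => phaseMap U (t, ρ)) 0

/-- The derivative `(∂U/∂t, ∂U'/∂t)` of the phase map in the initial value. -/
noncomputable def variation (U : ℝ → ℝ → ℝ) (p : ℝ × ℝ) : ℝ × ℝ :=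
  deriv (fun s => phaseMap U (s, p.2)) p.1

lemma continuousAt_apply_projIcc {E : Type*} [TopologicalSpace E] {a b : ℝ} (hab : a ≤ b)
    {g : ℝ → C(Icc a b, E)} (hg : ContinuousAt g p.1) :
    ContinuousAt (fun q : ℝ × ℝ => g q.1 (projIcc a b hab q.2)) p :=
  (hg.comp continuousAt_fst).eval (continuous_projIcc.comp continuous_snd).continuousAt

namespace IsProfileFamily

lemma phaseCurve_apply (h : IsProfileFamily f U r) (ht : 0 < t) (hR : R < r t)
    (ρ : Icc (-R) R) : phaseCurve U R t ρ = phaseMap U (t, ρ) := by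
  have hsub : Icc (-R) R ⊆ Ioo (-π) π := (Icc_subset_Icc (neg_le_neg hR.le) hR.le).trans
    fun _ => (h.isProfile ht).mem_Ioo_pi
  exact ContinuousMap.mkD_apply_of_continuousOn
    (((h.isEvenSol ht).2.1.continuousOn.prodMk
      (h.isEvenSol ht).contDiffOn_deriv.continuousOn).mono hsub)

lemma isOpen_setOf_lt_radius (h : IsProfileFamily f U r) (hf : ContDiff ℝ 1 f)
    (hpos : ∀ x > 0, 0 < f x) (hR : 0 ≤ R) : IsOpen {s | 0 < s ∧ R < r s} :=
  isOpen_iff_mem_nhds.2 fun _ ht => h.eventually_lt_radius hf hpos ht.1 ⟨hR, ht.2⟩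

lemma contDiffOn_phaseCurve (h : IsProfileFamily f U r) (hf : ContDiff ℝ 1 f)
    (hpos : ∀ x > 0, 0 < f x) (hR : 0 ≤ R) :
    ContDiffOn ℝ 1 (phaseCurve U R) {s | 0 < s ∧ R < r s} := by
  refine contDiffOn_one_of_slope (h.isOpen_setOf_lt_radius hf hpos hR) fun t ht ε hε => ?_
  obtain ⟨u, hu, hslope⟩ := h.exists_mem_nhds_norm_slope_sub_le_abs hf hpos ht.1 ⟨hR, ht.2⟩ hε
  have happly : ∀ x ∈ {s | 0 < s ∧ R < r s}, ∀ x' ∈ {s | 0 < s ∧ R < r s}, ∀ ρ : Icc (-R) R,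
      slope (phaseCurve U R) x x' ρ = slope (fun q => phaseMap U (q, ρ)) x x' := by
    intro x hx x' hx' ρ
    simp [slope_def_module, h.phaseCurve_apply hx.1 hx.2, h.phaseCurve_apply hx'.1 hx'.2]
  refine ⟨_, inter_mem hu ((h.isOpen_setOf_lt_radius hf hpos hR).mem_nhds ht),
    fun x hx x' hx' y hy y' hy' hxx' hyy' => (ContinuousMap.norm_le _ hε.le).2 fun ρ => ?_⟩
  rw [ContinuousMap.sub_apply, happly x hx.2 x' hx'.2, happly y hy.2 y' hy'.2]
  exact hslope x hx.1 x' hx'.1 y hy.1 y' hy'.1 hxx' hyy' ρ ρ.2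

lemma hasDerivAt_phaseCurve_apply (h : IsProfileFamily f U r) (hf : ContDiff ℝ 1 f)
    (hpos : ∀ x > 0, 0 < f x) (ht : 0 < t) (hR0 : 0 ≤ R) (hR : R < r t) (ρ : Icc (-R) R) :
    HasDerivAt (fun s => phaseMap U (s, ρ)) (deriv (phaseCurve U R) t ρ) t := by
  have hnhds := (h.isOpen_setOf_lt_radius hf hpos hR0).mem_nhds ⟨ht, hR⟩
  have hcurve := ((h.contDiffOn_phaseCurve hf hpos hR0).contDiffAt hnhds).differentiableAt
    one_ne_zero |>.hasDerivAt
  refine ((ContinuousMap.evalCLM ℝ ρ).hasFDerivAt.comp_hasDerivAt t hcurve).congr_of_eventuallyEq ?_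
  filter_upwards [hnhds] with s hs
  exact (h.phaseCurve_apply hs.1 hs.2 ρ).symm

lemma exists_radius_eventually (h : IsProfileFamily f U r) (hf : ContDiff ℝ 1 f)
    (hpos : ∀ x > 0, 0 < f x) (hp : p ∈ profileDomain r) :
    ∃ R ≥ 0, ∀ᶠ q in 𝓝 p, (0 < q.1 ∧ R < r q.1) ∧ q.2 ∈ Icc (-R) R := by
  obtain ⟨R, hpR, hR⟩ := exists_between (abs_lt.2 hp.2)
  have hR0 : 0 ≤ R := (abs_nonneg _).trans hpR.le
  exact ⟨R, hR0, (continuousAt_fst.eventually (h.eventually_lt_radius hf hpos hp.1 ⟨hR0, hR⟩)).and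
    (continuousAt_snd.eventually (Icc_mem_nhds (abs_lt.1 hpR).1 (abs_lt.1 hpR).2))⟩

lemma isOpen_profileDomain (h : IsProfileFamily f U r) (hf : ContDiff ℝ 1 f)
    (hpos : ∀ x > 0, 0 < f x) : IsOpen (profileDomain r) := by
  refine isOpen_iff_mem_nhds.2 fun p hp => ?_
  obtain ⟨R, -, hev⟩ := h.exists_radius_eventually hf hpos hp
  filter_upwards [hev] with q hq
  exact ⟨hq.1.1, by linarith [hq.1.2, hq.2.1], by linarith [hq.1.2, hq.2.2]⟩

lemma hasDerivAt_phaseMap_fst (h : IsProfileFamily f U r) (hf : ContDiff ℝ 1 f)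
    (hpos : ∀ x > 0, 0 < f x) (hp : p ∈ profileDomain r) :
    HasDerivAt (fun s => phaseMap U (s, p.2)) (variation U p) p.1 := by
  obtain ⟨R, hR, hev⟩ := h.exists_radius_eventually hf hpos hp
  have hp' := hev.self_of_nhds
  exact (h.hasDerivAt_phaseCurve_apply hf hpos hp.1 hR hp'.1.2
    ⟨p.2, hp'.2⟩).differentiableAt.hasDerivAt

lemma continuousAt_phaseMap (h : IsProfileFamily f U r) (hf : ContDiff ℝ 1 f)
    (hpos : ∀ x > 0, 0 < f x) (hp : p ∈ profileDomain r) : ContinuousAt (phaseMap U) p := by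
  obtain ⟨R, hR, hev⟩ := h.exists_radius_eventually hf hpos hp
  have hcurve : ContinuousAt (phaseCurve U R) p.1 :=
    (h.contDiffOn_phaseCurve hf hpos hR).continuousOn.continuousAt
      ((h.isOpen_setOf_lt_radius hf hpos hR).mem_nhds hev.self_of_nhds.1)
  refine (continuousAt_apply_projIcc (by linarith : -R ≤ R) hcurve).congr ?_
  filter_upwards [hev] with q hq
  rw [h.phaseCurve_apply hq.1.1 hq.1.2, projIcc_of_mem _ hq.2]

lemma continuousAt_variation (h : IsProfileFamily f U r) (hf : ContDiff ℝ 1 f)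
    (hpos : ∀ x > 0, 0 < f x) (hp : p ∈ profileDomain r) : ContinuousAt (variation U) p := by
  obtain ⟨R, hR, hev⟩ := h.exists_radius_eventually hf hpos hp
  have hopen := h.isOpen_setOf_lt_radius hf hpos hR
  have hcurve : ContinuousAt (deriv (phaseCurve U R)) p.1 :=
    ((contDiffOn_one_iff_deriv_of_isOpen hopen).1
      (h.contDiffOn_phaseCurve hf hpos hR)).2.continuousAt (hopen.mem_nhds hev.self_of_nhds.1)
  refine (continuousAt_apply_projIcc (by linarith : -R ≤ R) hcurve).congr ?_
  filter_upwards [hev] with q hq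
  rw [projIcc_of_mem _ hq.2]
  exact (h.hasDerivAt_phaseCurve_apply hf hpos hq.1.1 hR hq.1.2 ⟨q.2, hq.2⟩).deriv.symm

end IsProfileFamily

end Curves

section Linearization

open Filter Topology

variable {f : ℝ → ℝ} {U : ℝ → ℝ → ℝ} {r : ℝ → ℝ} {t : ℝ} {p : ℝ × ℝ}

/-- The Jacobian determinant of the phase map. -/
noncomputable def phaseJacobian (U : ℝ → ℝ → ℝ) (p : ℝ × ℝ) : ℝ :=
  (variation U p).1 * deriv (deriv (U p.1)) p.2 - (variation U p).2 * deriv (U p.1) p.2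

lemma exists_first_nonpos {φ : ℝ → ℝ} {a b : ℝ} (hab : a ≤ b) (hφ : ContinuousOn φ (Icc a b))
    (ha : 0 < φ a) (hb : φ b ≤ 0) : ∃ z ∈ Ioc a b, φ z ≤ 0 ∧ ∀ y ∈ Ico a z, 0 < φ y := by
  have hcompact : IsCompact (Icc a b ∩ φ ⁻¹' Iic 0) :=
    isCompact_Icc.of_isClosed_subset (hφ.preimage_isClosed_of_isClosed isClosed_Icc isClosed_Iic)
      inter_subset_left
  obtain ⟨z, ⟨hz, hz0⟩, hleast⟩ := hcompact.exists_isLeast ⟨b, right_mem_Icc.2 hab, hb⟩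
  have haz : a ≠ z := by rintro rfl; exact ha.not_ge hz0
  refine ⟨z, ⟨hz.1.lt_of_ne haz, hz.2⟩, hz0, fun y hy => ?_⟩
  by_contra! hy0
  exact (hleast ⟨⟨hy.1, hy.2.le.trans hz.2⟩, hy0⟩).not_gt hy.2

namespace IsProfileFamily

lemma snd_mem_Ioo_pi (h : IsProfileFamily f U r) (hp : p ∈ profileDomain r) :
    p.2 ∈ Ioo (-π) π :=
  (h.isProfile hp.1).mem_Ioo_pi ⟨hp.2.1.le, hp.2.2.le⟩

lemma hasDerivAt_phaseMap_snd (h : IsProfileFamily f U r) (hp : p ∈ profileDomain r) :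
    HasDerivAt (fun x => phaseMap U (p.1, x))
      (deriv (U p.1) p.2, deriv (deriv (U p.1)) p.2) p.2 :=
  ((h.isEvenSol hp.1).hasDerivAt (h.snd_mem_Ioo_pi hp)).prodMk
    ((h.isEvenSol hp.1).hasDerivAt_deriv (h.snd_mem_Ioo_pi hp))

lemma hasDerivAt_apply_fst (h : IsProfileFamily f U r) (hf : ContDiff ℝ 1 f)
    (hpos : ∀ x > 0, 0 < f x) (hp : p ∈ profileDomain r) :
    HasDerivAt (fun s => U s p.2) (variation U p).1 p.1 :=
  (ContinuousLinearMap.fst ℝ ℝ ℝ).hasFDerivAt.comp_hasDerivAt p.1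
    (h.hasDerivAt_phaseMap_fst hf hpos hp)

lemma hasDerivAt_deriv_apply_fst (h : IsProfileFamily f U r) (hf : ContDiff ℝ 1 f)
    (hpos : ∀ x > 0, 0 < f x) (hp : p ∈ profileDomain r) :
    HasDerivAt (fun s => deriv (U s) p.2) (variation U p).2 p.1 :=
  (ContinuousLinearMap.snd ℝ ℝ ℝ).hasFDerivAt.comp_hasDerivAt p.1
    (h.hasDerivAt_phaseMap_fst hf hpos hp)

lemma continuousAt_apply (h : IsProfileFamily f U r) (hf : ContDiff ℝ 1 f)
    (hpos : ∀ x > 0, 0 < f x) (hp : p ∈ profileDomain r) :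
    ContinuousAt (fun q : ℝ × ℝ => U q.1 q.2) p :=
  (h.continuousAt_phaseMap hf hpos hp).fst

lemma continuousAt_deriv_deriv_of_ne (h : IsProfileFamily f U r) (hf : ContDiff ℝ 1 f)
    (hpos : ∀ x > 0, 0 < f x) (hp : p ∈ profileDomain r) (hne : p.2 ≠ 0) :
    ContinuousAt (fun q : ℝ × ℝ => deriv (deriv (U q.1)) q.2) p := by
  have hsin : sin p.2 ≠ 0 := (sin_eq_zero_iff_of_lt_of_lt (h.snd_mem_Ioo_pi hp).1
    (h.snd_mem_Ioo_pi hp).2).not.2 hne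
  have hderiv : ContinuousAt (fun q : ℝ × ℝ => deriv (U q.1) q.2) p :=
    (h.continuousAt_phaseMap hf hpos hp).snd
  have hrhs : ContinuousAt
      (fun q : ℝ × ℝ => -(cos q.2 / sin q.2) * deriv (U q.1) q.2 - f (U q.1 q.2)) p :=
    (((continuous_cos.comp continuous_snd).continuousAt.div
      (continuous_sin.comp continuous_snd).continuousAt hsin).neg.mul hderiv).sub
      (hf.continuous.continuousAt.comp (h.continuousAt_apply hf hpos hp))
  refine hrhs.congr ?_
  filter_upwards [(h.isOpen_profileDomain hf hpos).mem_nhds hp,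
    continuousAt_snd.eventually_ne hne] with q hq hq0
  linarith [(h.isEvenSol hq.1).2.2 q.2 (h.snd_mem_Ioo_pi hq) hq0]

lemma continuousAt_deriv_deriv_zero (h : IsProfileFamily f U r) (hf : ContDiff ℝ 1 f)
    (hpos : ∀ x > 0, 0 < f x) (ht : 0 < t) :
    ContinuousAt (fun q : ℝ × ℝ => deriv (deriv (U q.1)) q.2) (t, 0) := by
  have hp : (t, 0) ∈ profileDomain r :=
    ⟨ht, neg_lt_zero.2 (h.radius_mem ht).1, (h.radius_mem ht).1⟩
  set w : ℝ × ℝ → ℝ := fun q => deriv (deriv (U q.1)) q.2 + f (U t 0) / (1 + cos q.2) with hw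
  have hw0 : w (t, 0) = 0 := by
    simp only [hw, (h.isEvenSol ht).deriv_deriv_zero hf.continuous, cos_zero]; ring
  have hwc : ContinuousAt w (t, 0) := by
    refine Metric.continuousAt_iff'.2 fun ε hε => ?_
    obtain ⟨δ, hδ, hball⟩ := Metric.eventually_nhds_iff_ball.1
      ((hf.continuous.continuousAt.comp (h.continuousAt_apply hf hpos hp)).eventually
        (Metric.closedBall_mem_nhds _ (show 0 < ε / 3 by positivity)))
    filter_upwards [(h.isOpen_profileDomain hf hpos).mem_nhds hp,
      Metric.ball_mem_nhds (t, (0 : ℝ)) (lt_min hδ pi_div_two_pos)] with q hq hqδ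
    rw [← ball_prod_same, mem_prod, mem_ball_zero_iff, norm_eq_abs] at hqδ
    have hle := (h.isEvenSol hq.1).abs_deriv_deriv_add_le hf.continuous
      (hqδ.2.trans_le (min_le_right _ _)) fun x hx => hball (q.1, x) <| by
        rw [← ball_prod_same, mem_prod, mem_ball_zero_iff, norm_eq_abs]
        exact ⟨Metric.ball_subset_ball (min_le_left _ _) hqδ.1,
          hx.trans_lt (hqδ.2.trans_le (min_le_left _ _))⟩
    rw [hw0, dist_zero_right, norm_eq_abs]
    exact hle.trans_lt (by linarith)
  have hquot : ContinuousAt (fun q : ℝ × ℝ => f (U t 0) / (1 + cos q.2)) (t, 0) :=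
    ContinuousAt.div (by fun_prop) (by fun_prop) (by norm_num)
  exact (hwc.sub hquot).congr (Eventually.of_forall fun q => add_sub_cancel_right _ _)

lemma continuousAt_deriv_deriv (h : IsProfileFamily f U r) (hf : ContDiff ℝ 1 f)
    (hpos : ∀ x > 0, 0 < f x) (hp : p ∈ profileDomain r) :
    ContinuousAt (fun q : ℝ × ℝ => deriv (deriv (U q.1)) q.2) p := by
  rcases eq_or_ne p.2 0 with h0 | hne
  · rw [← Prod.mk.eta (p := p), h0]
    exact h.continuousAt_deriv_deriv_zero hf hpos hp.1
  · exact h.continuousAt_deriv_deriv_of_ne hf hpos hp hne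

lemma contDiffOn_phaseMap (h : IsProfileFamily f U r) (hf : ContDiff ℝ 1 f)
    (hpos : ∀ x > 0, 0 < f x) : ContDiffOn ℝ 1 (phaseMap U) (profileDomain r) :=
  contDiffOn_one_of_partials (h.isOpen_profileDomain hf hpos)
    (fun _ hp => h.hasDerivAt_phaseMap_fst hf hpos hp) (fun _ hp => h.hasDerivAt_phaseMap_snd hp)
    (fun _ hp => (h.continuousAt_variation hf hpos hp).continuousWithinAt)
    (fun _ hp => ((h.continuousAt_phaseMap hf hpos hp).snd.prodMk
      (h.continuousAt_deriv_deriv hf hpos hp)).continuousWithinAt)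

lemma hasStrictFDerivAt_phaseMap (h : IsProfileFamily f U r) (hf : ContDiff ℝ 1 f)
    (hpos : ∀ x > 0, 0 < f x) (hp : p ∈ profileDomain r) :
    HasStrictFDerivAt (phaseMap U)
      (ofPartials (variation U p) (deriv (U p.1) p.2, deriv (deriv (U p.1)) p.2)) p :=
  have hnhds := (h.isOpen_profileDomain hf hpos).mem_nhds hp
  hasStrictFDerivAt_of_partials
    (eventually_of_mem hnhds fun _ hq => h.hasDerivAt_phaseMap_fst hf hpos hq)
    (eventually_of_mem hnhds fun _ hq => h.hasDerivAt_phaseMap_snd hq)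
    (h.continuousAt_variation hf hpos hp)
    ((h.continuousAt_phaseMap hf hpos hp).snd.prodMk (h.continuousAt_deriv_deriv hf hpos hp))

lemma eventually_mem_profileDomain (h : IsProfileFamily f U r) (hf : ContDiff ℝ 1 f)
    (hpos : ∀ x > 0, 0 < f x) (hp : p ∈ profileDomain r) :
    ∀ᶠ x in 𝓝 p.2, (p.1, x) ∈ profileDomain r :=
  (Continuous.prodMk_right p.1).continuousAt.eventually
    ((h.isOpen_profileDomain hf hpos).mem_nhds hp)

lemma hasDerivAt_variation_fst (h : IsProfileFamily f U r) (hf : ContDiff ℝ 1 f)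
    (hpos : ∀ x > 0, 0 < f x) (hp : p ∈ profileDomain r) :
    HasDerivAt (fun x => (variation U (p.1, x)).1) (variation U p).2 p.2 := by
  have hnhds := (h.isOpen_profileDomain hf hpos).mem_nhds hp
  exact hasDerivAt_of_mixed (a := fun q => U q.1 q.2) (b := fun q => deriv (U q.1) q.2)
    (β := fun q => (variation U q).2)
    (eventually_of_mem hnhds fun q hq => (h.isEvenSol hq.1).hasDerivAt (h.snd_mem_Ioo_pi hq))
    (eventually_of_mem hnhds fun q hq => h.hasDerivAt_deriv_apply_fst hf hpos hq)
    (h.continuousAt_variation hf hpos hp).snd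
    ((h.eventually_mem_profileDomain hf hpos hp).mono fun x hx =>
      h.hasDerivAt_apply_fst hf hpos hx)

lemma hasDerivAt_sin_mul_variation_snd (h : IsProfileFamily f U r) (hf : ContDiff ℝ 1 f)
    (hpos : ∀ x > 0, 0 < f x) (hp : p ∈ profileDomain r) :
    HasDerivAt (fun x => sin x * (variation U (p.1, x)).2)
      (-(sin p.2 * (deriv f (U p.1 p.2) * (variation U p).1))) p.2 := by
  have hnhds := (h.isOpen_profileDomain hf hpos).mem_nhds hp
  refine hasDerivAt_of_mixed (a := fun q => sin q.2 * deriv (U q.1) q.2)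
    (b := fun q => -(sin q.2 * f (U q.1 q.2)))
    (β := fun q => -(sin q.2 * (deriv f (U q.1 q.2) * (variation U q).1)))
    (eventually_of_mem hnhds fun q hq =>
      (h.isEvenSol hq.1).hasDerivAt_sin_mul_deriv (h.snd_mem_Ioo_pi hq))
    (eventually_of_mem hnhds fun q hq =>
      (((hf.differentiable one_ne_zero _).hasDerivAt.comp q.1
        (h.hasDerivAt_apply_fst hf hpos hq)).const_mul (sin q.2)).neg)
    ?_
    ((h.eventually_mem_profileDomain hf hpos hp).mono fun x hx =>
      (h.hasDerivAt_deriv_apply_fst hf hpos hx).const_mul (sin x))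
  exact ((continuous_sin.comp continuous_snd).continuousAt.mul
    (((hf.continuous_deriv le_rfl).continuousAt.comp (h.continuousAt_apply hf hpos hp)).mul
      (h.continuousAt_variation hf hpos hp).fst)).neg

lemma variation_zero (h : IsProfileFamily f U r) (ht : 0 < t) : variation U (t, 0) = (1, 0) := by
  have heq : (fun s => phaseMap U (s, 0)) =ᶠ[𝓝 t] fun s => (s, 0) := by
    filter_upwards [Ioi_mem_nhds ht] with s hs
    simp only [phaseMap, (h s hs).2, (h.isEvenSol hs).deriv_zero]
  exact heq.deriv_eq.trans ((hasDerivAt_id t).prodMk (hasDerivAt_const t 0)).deriv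

lemma variation_neg (h : IsProfileFamily f U r) (hf : ContDiff ℝ 1 f)
    (hpos : ∀ x > 0, 0 < f x) (hp : p ∈ profileDomain r) :
    variation U (p.1, -p.2) = ((variation U p).1, -(variation U p).2) := by
  have heq : (fun s => phaseMap U (s, -p.2)) =ᶠ[𝓝 p.1] fun s => (U s p.2, -deriv (U s) p.2) := by
    filter_upwards [Ioi_mem_nhds hp.1] with s hs
    simp only [phaseMap, (h.isEvenSol hs).1 _ (h.snd_mem_Ioo_pi hp),
      (h.isEvenSol hs).deriv_neg (h.snd_mem_Ioo_pi hp)]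
  exact heq.deriv_eq.trans ((h.hasDerivAt_apply_fst hf hpos hp).prodMk
    (h.hasDerivAt_deriv_apply_fst hf hpos hp).neg).deriv

end IsProfileFamily

end Linearization

section Monotonicity

open Filter Topology

variable {f : ℝ → ℝ} {U : ℝ → ℝ → ℝ} {r : ℝ → ℝ} {t z : ℝ} {p : ℝ × ℝ}

namespace IsProfileFamily

lemma mk_mem_profileDomain (h : IsProfileFamily f U r) (ht : 0 < t) {x : ℝ}
    (hx : x ∈ Ico 0 (r t)) : (t, x) ∈ profileDomain r :=
  ⟨ht, by linarith [hx.1, (h.radius_mem ht).1], hx.2⟩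

lemma apply_pos (h : IsProfileFamily f U r) (hp : p ∈ profileDomain r) : 0 < U p.1 p.2 :=
  (h.isProfile hp.1).apply_pos ⟨hp.2.1, hp.2.2⟩

lemma deriv_nonpos_iff (h : IsProfileFamily f U r) (hpos : ∀ x > 0, 0 < f x)
    (hp : p ∈ profileDomain r) : deriv (U p.1) p.2 ≤ 0 ↔ 0 ≤ p.2 := by
  refine ⟨fun hV => ?_, fun hρ => ?_⟩
  · by_contra! hρ
    have hneg := (h.isProfile hp.1).deriv_neg hpos
      (ρ := -p.2) ⟨neg_pos.2 hρ, by linarith [hp.2.1]⟩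
    rw [(h.isEvenSol hp.1).deriv_neg (h.snd_mem_Ioo_pi hp)] at hneg
    linarith
  · rcases hρ.eq_or_lt with h0 | h0
    · rw [← h0, (h.isEvenSol hp.1).deriv_zero]
    · exact ((h.isProfile hp.1).deriv_neg hpos ⟨h0, hp.2.2.le⟩).le

lemma hasDerivAt_wronskian (h : IsProfileFamily f U r) (hf : ContDiff ℝ 1 f)
    (hpos : ∀ x > 0, 0 < f x) (hp : p ∈ profileDomain r) :
    HasDerivAt (fun x => sin x * (variation U (p.1, x)).2 * U p.1 x -
        (variation U (p.1, x)).1 * (sin x * deriv (U p.1) x))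
      (sin p.2 * (variation U p).1 * (f (U p.1 p.2) - U p.1 p.2 * deriv f (U p.1 p.2))) p.2 := by
  have hρ := h.snd_mem_Ioo_pi hp
  refine (((h.hasDerivAt_sin_mul_variation_snd hf hpos hp).mul
    ((h.isEvenSol hp.1).hasDerivAt hρ)).sub ((h.hasDerivAt_variation_fst hf hpos hp).mul
      ((h.isEvenSol hp.1).hasDerivAt_sin_mul_deriv hρ))).congr_deriv ?_
  ring

lemma wronskian_nonneg (h : IsProfileFamily f U r) (hf : ContDiff ℝ 1 f)
    (hpos : ∀ x > 0, 0 < f x) (hsub : ∀ x > 0, x * deriv f x ≤ f x) (ht : 0 < t)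
    (hz : z ∈ Ico 0 (r t)) (hφ : ∀ x ∈ Ico 0 z, 0 < (variation U (t, x)).1) :
    0 ≤ (variation U (t, z)).2 * U t z - (variation U (t, z)).1 * deriv (U t) z := by
  have hmem : ∀ x ∈ Icc 0 z, (t, x) ∈ profileDomain r := fun x hx =>
    h.mk_mem_profileDomain ht ⟨hx.1, hx.2.trans_lt hz.2⟩
  have hmono := monotoneOn_of_hasDerivWithinAt_nonneg (convex_Icc 0 z)
    (fun x hx => (h.hasDerivAt_wronskian hf hpos (hmem x hx)).continuousAt.continuousWithinAt)
    (fun x hx => (h.hasDerivAt_wronskian hf hpos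
      (hmem x (interior_subset hx))).hasDerivWithinAt) fun x hx => by
    rw [interior_Icc] at hx
    have hp := hmem x (Ioo_subset_Icc_self hx)
    have hsin := sin_nonneg_of_nonneg_of_le_pi hx.1.le (h.snd_mem_Ioo_pi hp).2.le
    exact mul_nonneg (mul_nonneg hsin (hφ x ⟨hx.1.le, hx.2⟩).le)
      (sub_nonneg.2 (hsub _ (h.apply_pos hp)))
  rcases hz.1.eq_or_lt with rfl | hz0
  · simp [variation_zero h ht, (h.isEvenSol ht).deriv_zero]
  have hW := hmono (left_mem_Icc.2 hz.1) (right_mem_Icc.2 hz.1) hz.1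
  have hsin := sin_pos_of_pos_of_lt_pi hz0 (hz.2.trans (h.radius_mem ht).2)
  simp only [sin_zero, zero_mul, mul_zero, sub_zero] at hW
  refine nonneg_of_mul_nonneg_right (hW.trans_eq ?_) hsin
  ring

lemma variation_fst_pos (h : IsProfileFamily f U r) (hf : ContDiff ℝ 1 f)
    (hpos : ∀ x > 0, 0 < f x) (hsub : ∀ x > 0, x * deriv f x ≤ f x) (ht : 0 < t)
    (hz : z ∈ Ico 0 (r t)) : 0 < (variation U (t, z)).1 := by
  have hmem : ∀ x ∈ Icc 0 z, (t, x) ∈ profileDomain r := fun x hx =>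
    h.mk_mem_profileDomain ht ⟨hx.1, hx.2.trans_lt hz.2⟩
  by_contra! hneg
  obtain ⟨y, hy, hy0, hφ⟩ := exists_first_nonpos hz.1
    (fun x hx => (h.hasDerivAt_variation_fst hf hpos (hmem x hx)).continuousAt.continuousWithinAt)
    (by simp [h.variation_zero ht]) hneg
  have hquot : ∀ x ∈ Icc 0 y, HasDerivAt (fun x => (variation U (t, x)).1 / U t x)
      (((variation U (t, x)).2 * U t x - (variation U (t, x)).1 * deriv (U t) x) / U t x ^ 2)
      x := fun x hx => by
    have hp := hmem x ⟨hx.1, hx.2.trans hy.2⟩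
    exact (h.hasDerivAt_variation_fst hf hpos hp).div
      ((h.isEvenSol ht).hasDerivAt (h.snd_mem_Ioo_pi hp)) (h.apply_pos hp).ne'
  have hmono := monotoneOn_of_hasDerivWithinAt_nonneg (convex_Icc 0 y)
    (fun x hx => (hquot x hx).continuousAt.continuousWithinAt)
    (fun x hx => (hquot x (interior_subset hx)).hasDerivWithinAt) fun x hx => by
    have hx' := interior_subset hx
    exact div_nonneg (h.wronskian_nonneg hf hpos hsub ht
      ⟨hx'.1, (hx'.2.trans hy.2).trans_lt hz.2⟩
      fun w hw => hφ w ⟨hw.1, hw.2.trans_le hx'.2⟩) (sq_nonneg _)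
  have hle := hmono (left_mem_Icc.2 hy.1.le) (right_mem_Icc.2 hy.1.le) hy.1.le
  simp only [h.variation_zero ht, (h t ht).2] at hle
  have hUy := h.apply_pos (hmem y ⟨hy.1.le, hy.2⟩)
  exact (one_div_pos.2 ht).not_ge (hle.trans (div_nonpos_of_nonpos_of_nonneg hy0 hUy.le))

lemma hasDerivAt_sin_mul_phaseJacobian (h : IsProfileFamily f U r) (hf : ContDiff ℝ 1 f)
    (hpos : ∀ x > 0, 0 < f x) (ht : 0 < t) (hz : z ∈ Ioo 0 (r t)) :
    HasDerivAt (fun x => sin x * phaseJacobian U (t, x))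
      ((variation U (t, z)).1 * deriv (U t) z / sin z) z := by
  have hp := h.mk_mem_profileDomain ht (Ioo_subset_Ico_self hz)
  have hrπ := (h.radius_mem ht).2
  have hsol := h.isEvenSol ht
  have hρ := h.snd_mem_Ioo_pi hp
  have hsin := (sin_pos_of_pos_of_lt_pi hz.1 (hz.2.trans hrπ)).ne'
  have heq : (fun x => sin x * phaseJacobian U (t, x)) =ᶠ[𝓝 z] fun x =>
      (variation U (t, x)).1 * -(cos x * deriv (U t) x + sin x * f (U t x)) -
        sin x * (variation U (t, x)).2 * deriv (U t) x := by
    filter_upwards [Ioo_mem_nhds hz.1 hz.2] with x hx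
    have := (sin_pos_of_pos_of_lt_pi hx.1 (hx.2.trans hrπ)).ne'
    rw [phaseJacobian, hsol.deriv_deriv_eq ⟨hx.1, hx.2.trans hrπ⟩]
    field_simp
    ring
  have hfU := (hf.differentiable one_ne_zero (U t z)).hasDerivAt.comp z (hsol.hasDerivAt hρ)
  refine HasDerivAt.congr_of_eventuallyEq (HasDerivAt.congr_deriv
    (((h.hasDerivAt_variation_fst hf hpos hp).mul
      (((hasDerivAt_cos z).mul (hsol.hasDerivAt_deriv hρ)).add
        ((hasDerivAt_sin z).mul hfU)).neg).sub
    ((h.hasDerivAt_sin_mul_variation_snd hf hpos hp).mul (hsol.hasDerivAt_deriv hρ))) ?_) heq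
  simp only [hsol.deriv_deriv_eq ⟨hz.1, hz.2.trans hrπ⟩, Pi.add_apply, Pi.mul_apply,
    Pi.neg_apply, Function.comp_apply]
  field_simp
  linear_combination (variation U (t, z)).1 * deriv (U t) z * sin_sq_add_cos_sq z

lemma phaseJacobian_neg_of_nonneg (h : IsProfileFamily f U r) (hf : ContDiff ℝ 1 f)
    (hpos : ∀ x > 0, 0 < f x) (hsub : ∀ x > 0, x * deriv f x ≤ f x) (ht : 0 < t)
    (hz : z ∈ Ico 0 (r t)) : phaseJacobian U (t, z) < 0 := by
  rcases hz.1.eq_or_lt with rfl | hz0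
  · have := hpos t ht
    simp only [phaseJacobian, h.variation_zero ht,
      (h.isEvenSol ht).deriv_deriv_zero hf.continuous, (h t ht).2]
    linarith
  have hcont : ContinuousOn (fun x => sin x * phaseJacobian U (t, x)) (Icc 0 z) := fun x hx => by
    have hp := h.mk_mem_profileDomain ht ⟨hx.1, hx.2.trans_lt hz.2⟩
    have hρ := h.snd_mem_Ioo_pi hp
    have hφ := (h.hasDerivAt_variation_fst hf hpos hp).continuousAt
    have hψ := (h.hasDerivAt_sin_mul_variation_snd hf hpos hp).continuousAt
    have hV := ((h.isEvenSol ht).hasDerivAt_deriv hρ).continuousAt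
    have hV' := (h.isEvenSol ht).continuousAt_deriv_deriv hρ
    refine ((continuous_sin.continuousAt.mul (hφ.mul hV')).sub (hψ.mul hV)).congr
      (.of_forall fun x => ?_) |>.continuousWithinAt
    simp only [phaseJacobian, Pi.sub_apply, Pi.mul_apply]
    ring
  have hanti := strictAntiOn_of_deriv_neg (convex_Icc 0 z) hcont fun x hx => by
    rw [interior_Icc] at hx
    have hxr : x ∈ Ioo 0 (r t) := ⟨hx.1, hx.2.trans hz.2⟩
    rw [(h.hasDerivAt_sin_mul_phaseJacobian hf hpos ht hxr).deriv]
    exact div_neg_of_neg_of_pos (mul_neg_of_pos_of_neg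
      (h.variation_fst_pos hf hpos hsub ht (Ioo_subset_Ico_self hxr))
      ((h.isProfile ht).deriv_neg hpos (Ioo_subset_Ioc_self hxr)))
      (sin_pos_of_pos_of_lt_pi hx.1 (hxr.2.trans (h.radius_mem ht).2))
  have hlt := hanti (left_mem_Icc.2 hz.1) (right_mem_Icc.2 hz.1) hz0
  simp only [sin_zero, zero_mul] at hlt
  exact neg_of_mul_neg_right hlt
    (sin_pos_of_pos_of_lt_pi hz0 (hz.2.trans (h.radius_mem ht).2)).le

lemma phaseJacobian_neg_snd (h : IsProfileFamily f U r) (hf : ContDiff ℝ 1 f)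
    (hpos : ∀ x > 0, 0 < f x) (hp : p ∈ profileDomain r) :
    phaseJacobian U (p.1, -p.2) = phaseJacobian U p := by
  have hρ := h.snd_mem_Ioo_pi hp
  simp only [phaseJacobian, h.variation_neg hf hpos hp, (h.isEvenSol hp.1).deriv_neg hρ,
    (h.isEvenSol hp.1).deriv_deriv_neg hρ, neg_mul_neg]

lemma phaseJacobian_neg (h : IsProfileFamily f U r) (hf : ContDiff ℝ 1 f)
    (hpos : ∀ x > 0, 0 < f x) (hsub : ∀ x > 0, x * deriv f x ≤ f x) (hp : p ∈ profileDomain r) :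
    phaseJacobian U p < 0 := by
  rcases le_total 0 p.2 with hρ | hρ
  · exact h.phaseJacobian_neg_of_nonneg hf hpos hsub hp.1 ⟨hρ, hp.2.2⟩
  · rw [← h.phaseJacobian_neg_snd hf hpos hp]
    exact h.phaseJacobian_neg_of_nonneg hf hpos hsub hp.1
      ⟨neg_nonneg.2 hρ, by linarith [hp.2.1]⟩

end IsProfileFamily

end Monotonicity

section Growth

variable {f u : ℝ → ℝ} {U : ℝ → ℝ → ℝ} {r : ℝ → ℝ} {t ρ : ℝ}

lemma antitoneOn_div_self_of_mul_deriv_le (hf : Differentiable ℝ f)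
    (hsub : ∀ x > 0, x * deriv f x ≤ f x) : AntitoneOn (fun x => f x / x) (Ioi 0) := by
  have hderiv : ∀ x ∈ Ioi (0 : ℝ), HasDerivAt (fun x => f x / x)
      ((deriv f x * x - f x * 1) / x ^ 2) x := fun x hx =>
    (hf x).hasDerivAt.div (hasDerivAt_id x) (ne_of_gt hx)
  refine antitoneOn_of_hasDerivWithinAt_nonpos (convex_Ioi 0)
    (fun x hx => (hderiv x hx).continuousAt.continuousWithinAt)
    (fun x hx => (hderiv x (interior_subset hx)).hasDerivWithinAt) fun x hx => ?_
  have hle := hsub x (interior_subset hx)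
  exact div_nonpos_of_nonpos_of_nonneg (by linarith) (sq_nonneg x)

lemma exists_le_mul_one_add_of_mul_deriv_le (hf : Differentiable ℝ f)
    (hsub : ∀ x > 0, x * deriv f x ≤ f x) : ∃ K > 0, ∀ x ≥ 0, f x ≤ K * (1 + x) := by
  obtain ⟨M, hM⟩ := (isCompact_Icc (a := (0 : ℝ)) (b := 1)).bddAbove_image
    hf.continuous.continuousOn
  refine ⟨max M 1, by positivity, fun x hx => ?_⟩
  have hf_le : ∀ y ∈ Icc (0 : ℝ) 1, f y ≤ max M 1 := fun y hy =>
    (hM (mem_image_of_mem f hy)).trans (le_max_left M 1)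
  have hK : 0 < max M 1 := by positivity
  rcases le_total x 1 with hx1 | hx1
  · nlinarith [hf_le x ⟨hx, hx1⟩]
  · have hx0 : 0 < x := one_pos.trans_le hx1
    have hquot := antitoneOn_div_self_of_mul_deriv_le hf hsub (mem_Ioi.2 one_pos) hx0 hx1
    simp only [div_one] at hquot
    rw [div_le_iff₀ hx0] at hquot
    nlinarith [hf_le 1 (right_mem_Icc.2 zero_le_one)]

namespace IsEvenSol

lemma abs_deriv_le (h : IsEvenSol f u) {C : ℝ} (hρ : ρ ∈ Ioc 0 (π / 2))
    (hC : ∀ x ∈ Icc 0 ρ, |f (u x)| ≤ C) : |deriv u ρ| ≤ C := by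
  have hρπ : ρ < π := by linarith [hρ.2, pi_pos]
  have hsin : 0 < sin ρ := sin_pos_of_pos_of_lt_pi hρ.1 hρπ
  have hcos : 0 ≤ cos ρ := cos_nonneg_of_mem_Icc ⟨by linarith [hρ.1, pi_pos], hρ.2⟩
  have hC0 : 0 ≤ C := (abs_nonneg _).trans (hC 0 (left_mem_Icc.2 hρ.1.le))
  have hle := h.abs_sin_mul_deriv_add_le (m := 0) ⟨hρ.1.le, hρπ⟩ fun x hx => by
    rw [sub_zero]; exact hC x (Ico_subset_Icc_self hx)
  rw [zero_mul, add_zero, abs_mul, abs_of_pos hsin] at hle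
  have hsc : 1 - cos ρ ≤ sin ρ := by nlinarith [sin_sq_add_cos_sq ρ, mul_nonneg hsin.le hcos]
  refine le_of_mul_le_mul_left (hle.trans ?_) hsin
  rw [mul_comm]
  gcongr

lemma abs_apply_sub_apply_zero_le (h : IsEvenSol f u) {C : ℝ} (hρ : ρ ∈ Icc 0 (π / 2))
    (hC : ∀ x ∈ Icc 0 ρ, |f (u x)| ≤ C) : |u ρ - u 0| ≤ C * ρ := by
  have hderiv : ∀ x ∈ Icc 0 ρ, HasDerivWithinAt u (deriv u x) (Icc 0 ρ) x := fun x hx =>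
    (h.hasDerivAt ⟨by linarith [hx.1, pi_pos],
      by linarith [hx.2, hρ.2, pi_pos]⟩).hasDerivWithinAt
  have hbound : ∀ x ∈ Icc 0 ρ, ‖deriv u x‖ ≤ C := fun x hx => by
    rcases hx.1.eq_or_lt with rfl | hx0
    · rw [h.deriv_zero, norm_zero]
      exact (abs_nonneg _).trans (hC 0 hx)
    · exact h.abs_deriv_le ⟨hx0, hx.2.trans hρ.2⟩ fun y hy => hC y ⟨hy.1, hy.2.trans hx.2⟩
  have hle := (convex_Icc 0 ρ).norm_image_sub_le_of_norm_hasDerivWithin_le hderiv hbound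
    (left_mem_Icc.2 hρ.1) (right_mem_Icc.2 hρ.1)
  rwa [sub_zero, norm_eq_abs, norm_eq_abs, abs_of_nonneg hρ.1] at hle

end IsEvenSol

namespace IsProfileFamily

lemma abs_comp_apply_le (h : IsProfileFamily f U r) (hpos : ∀ x > 0, 0 < f x) {K : ℝ}
    (hK : ∀ x ≥ 0, f x ≤ K * (1 + x)) (ht : 0 < t) (hρ : ρ ∈ Ico 0 (r t)) :
    |f (U t ρ)| ≤ K * |U t ρ| + K := by
  have hUpos := h.apply_pos (h.mk_mem_profileDomain ht hρ)
  rw [abs_of_pos (hpos _ hUpos), abs_of_pos hUpos]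
  linarith [hK _ hUpos.le]

lemma half_le_apply (h : IsProfileFamily f U r) (hpos : ∀ x > 0, 0 < f x) {K : ℝ} (hK0 : 0 < K)
    (hK : ∀ x ≥ 0, f x ≤ K * (1 + x)) (ht : 1 ≤ t) (hρ : ρ ∈ Ico 0 (r t)) (hρπ : ρ ≤ π / 2)
    (hρK : 4 * K * ρ ≤ 1) : t / 2 ≤ U t ρ := by
  have ht0 : 0 < t := one_pos.trans_le ht
  have hfU : ∀ x ∈ Icc 0 ρ, |f (U t x)| ≤ 2 * K * t := fun x hx => by
    have hxr : x < r t := hx.2.trans_lt hρ.2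
    have hUx := h.apply_mem_Icc hpos ht0 ⟨hx.1, hxr.le⟩
    have hle := h.abs_comp_apply_le hpos hK ht0 ⟨hx.1, hxr⟩
    rw [abs_of_nonneg hUx.1] at hle
    nlinarith [hUx.2]
  have hclose := h.isEvenSol ht0 |>.abs_apply_sub_apply_zero_le ⟨hρ.1, hρπ⟩ hfU
  rw [(h t ht0).2] at hclose
  nlinarith [neg_abs_le (U t ρ - t)]

lemma norm_phaseMap_le (h : IsProfileFamily f U r) (hpos : ∀ x > 0, 0 < f x) {K δ : ℝ}
    (hK0 : 0 < K) (hK : ∀ x ≥ 0, f x ≤ K * (1 + x)) (ht : 0 < t) (hδ : 0 < δ)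
    (hδρ : δ ≤ ρ) (hρ : ρ < r t) : ‖phaseMap U (t, δ)‖ ≤
      2 * exp ((2 * |cos δ / sin δ| + K + 2) * π) * (‖phaseMap U (t, ρ)‖ + K) := by
  have hsol := h.isEvenSol ht
  have hrπ := (h.radius_mem ht).2
  have hsub : Icc δ ρ ⊆ Ioo (-π) π := fun x hx =>
    ⟨by linarith [hx.1, pi_pos], by linarith [hx.2]⟩
  have hIoo : ∀ x ∈ Ioo δ ρ, x ∈ Ioo 0 (r t) := fun x hx =>
    ⟨hδ.trans hx.1, hx.2.trans hρ⟩
  refine (norm_le_of_damped_backward (abs_nonneg (cos δ / sin δ)) hK0.le hK0.le hδρ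
    (fun x hx => (hsol.hasDerivAt (hsub hx)).continuousAt.continuousWithinAt)
    (hsol.contDiffOn_deriv.continuousOn.mono hsub)
    (fun x hx => hsol.hasDerivAt (hsub (Ioo_subset_Icc_self hx)))
    (c := fun x => cos x / sin x) (g := fun x => -f (U t x))
    (fun x hx => (hsol.hasDerivAt_deriv (hsub (Ioo_subset_Icc_self hx))).congr_deriv
      (hsol.deriv_deriv_eq ⟨(hIoo x hx).1, (hIoo x hx).2.trans hrπ⟩))
    (fun x hx => (cos_div_sin_le_cos_div_sin hδ hx.1.le ((hIoo x hx).2.trans hrπ)).trans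
      (le_abs_self _))
    (fun x hx => by
      rw [abs_neg]
      exact h.abs_comp_apply_le hpos hK ht (Ioo_subset_Ico_self (hIoo x hx)))).trans ?_
  simp only [phaseMap]
  gcongr
  linarith

lemma exists_le_mul_norm_phaseMap_add_one (h : IsProfileFamily f U r)
    (hf : Differentiable ℝ f) (hpos : ∀ x > 0, 0 < f x)
    (hsub : ∀ x > 0, x * deriv f x ≤ f x) :
    ∃ C, ∀ t ≥ 1, ∀ ρ ∈ Ico 0 (r t), t ≤ C * (‖phaseMap U (t, ρ)‖ + 1) := by
  obtain ⟨K, hK0, hK⟩ := exists_le_mul_one_add_of_mul_deriv_le hf hsub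
  obtain ⟨δ, hδ, hδπ, hδK⟩ : ∃ δ > 0, δ ≤ π / 2 ∧ 4 * K * δ ≤ 1 := by
    refine ⟨min (π / 2) (1 / (4 * K)), by positivity, min_le_left _ _, ?_⟩
    exact (mul_le_mul_of_nonneg_left (min_le_right _ _) (by positivity)).trans_eq
      (mul_one_div_cancel (by positivity))
  set E := 2 * exp ((2 * |cos δ / sin δ| + K + 2) * π)
  refine ⟨2 + 2 * (E * (1 + K)), fun t ht ρ hρ => ?_⟩
  have hE : 0 < E := by positivity
  have hnorm : ∀ x, U t x ≤ ‖phaseMap U (t, x)‖ := fun x =>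
    (le_abs_self _).trans (norm_fst_le (phaseMap U (t, x)))
  have hN := norm_nonneg (phaseMap U (t, ρ))
  have hEN := mul_nonneg hE.le hN
  have hEK := mul_pos hE hK0
  rcases le_total ρ δ with hρδ | hδρ
  · have hhalf := h.half_le_apply hpos hK0 hK ht hρ (hρδ.trans hδπ)
      ((mul_le_mul_of_nonneg_left hρδ (by positivity)).trans hδK)
    nlinarith [hnorm ρ, mul_nonneg hEK.le hN]
  · have hhalf := h.half_le_apply hpos hK0 hK ht ⟨hδ.le, hδρ.trans_lt hρ.2⟩ hδπ hδK
    have hback := h.norm_phaseMap_le hpos hK0 hK (by linarith) hδ hδρ hρ.2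
    nlinarith [hnorm δ, mul_nonneg hEK.le hN]

end IsProfileFamily

end Growth

section LevelCurves

open Filter Topology

variable {f : ℝ → ℝ} {U : ℝ → ℝ → ℝ} {r R : ℝ → ℝ} {x t ρ : ℝ}

/-- `t ↦ (t, R t)`, `t ≥ x`, parametrizes the part of the level set `{U_t(ρ) = x}` in the half
`ρ ≥ 0` of the domain. -/
def IsLevelCurve (U : ℝ → ℝ → ℝ) (r : ℝ → ℝ) (x : ℝ) (R : ℝ → ℝ) : Prop :=
  ∀ t ≥ x, R t ∈ Ico 0 (r t) ∧ U t (R t) = x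

lemma IsProfileFamily.exists_isLevelCurve (h : IsProfileFamily f U r) (hx : 0 < x) :
    ∃ R, IsLevelCurve U r x R := by
  have hivt : ∀ t ≥ x, ∃ ρ, ρ ∈ Ico 0 (r t) ∧ U t ρ = x := fun t ht => by
    have ht0 : 0 < t := hx.trans_le ht
    have hivt := intermediate_value_Icc' (h.radius_mem ht0).1.le (h.isProfile ht0).continuousOn
    rw [(h t ht0).2, (h.isProfile ht0).apply_radius] at hivt
    obtain ⟨ρ, hρ, rfl⟩ := hivt ⟨hx.le, ht⟩
    refine ⟨ρ, ⟨hρ.1, hρ.2.lt_of_ne ?_⟩, rfl⟩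
    rintro rfl
    exact hx.ne' (h.isProfile ht0).apply_radius
  choose! R hR using hivt
  exact ⟨R, hR⟩

namespace IsLevelCurve

lemma mem_profileDomain (hR : IsLevelCurve U r x R) (h : IsProfileFamily f U r) (hx : 0 < x)
    (ht : x ≤ t) : (t, R t) ∈ profileDomain r :=
  h.mk_mem_profileDomain (hx.trans_le ht) (hR t ht).1

lemma lt_iff (hR : IsLevelCurve U r x R) (h : IsProfileFamily f U r)
    (hpos : ∀ x > 0, 0 < f x) (hx : 0 < x) (ht : x ≤ t) (hρ : ρ ∈ Ico 0 (r t)) :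
    R t < ρ ↔ U t ρ < x := by
  have hanti := (h.isProfile (hx.trans_le ht)).strictAntiOn hpos
  rw [← hanti.lt_iff_gt (Ico_subset_Icc_self hρ) (Ico_subset_Icc_self (hR t ht).1), (hR t ht).2]

lemma eq_of_apply_eq (hR : IsLevelCurve U r x R) (h : IsProfileFamily f U r)
    (hpos : ∀ x > 0, 0 < f x) (hx : 0 < x) (ht : x ≤ t) (hρ : ρ ∈ Ico 0 (r t))
    (hU : U t ρ = x) : R t = ρ :=
  ((h.isProfile (hx.trans_le ht)).strictAntiOn hpos).injOn (Ico_subset_Icc_self (hR t ht).1)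
    (Ico_subset_Icc_self hρ) ((hR t ht).2.trans hU.symm)

lemma apply_self (hR : IsLevelCurve U r x R) (h : IsProfileFamily f U r)
    (hpos : ∀ x > 0, 0 < f x) (hx : 0 < x) : R x = 0 :=
  hR.eq_of_apply_eq h hpos hx le_rfl (left_mem_Ico.2 (h.radius_mem hx).1) (h x hx).2

lemma pos (hR : IsLevelCurve U r x R) (h : IsProfileFamily f U r) (hx : 0 < x) (ht : x < t) :
    0 < R t := by
  refine (hR t ht.le).1.1.lt_of_ne fun h0 => ht.ne ?_
  rw [← (hR t ht.le).2, ← h0, (h t (hx.trans ht)).2]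

lemma gt_iff (hR : IsLevelCurve U r x R) (h : IsProfileFamily f U r)
    (hpos : ∀ x > 0, 0 < f x) (hx : 0 < x) (ht : x ≤ t) (hρ : ρ ∈ Ico 0 (r t)) :
    ρ < R t ↔ x < U t ρ := by
  have hanti := (h.isProfile (hx.trans_le ht)).strictAntiOn hpos
  rw [← hanti.lt_iff_gt (Ico_subset_Icc_self (hR t ht).1) (Ico_subset_Icc_self hρ), (hR t ht).2]

lemma continuousWithinAt (hR : IsLevelCurve U r x R) (h : IsProfileFamily f U r)
    (hf : ContDiff ℝ 1 f) (hpos : ∀ x > 0, 0 < f x) (hx : 0 < x) (ht : x ≤ t) :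
    ContinuousWithinAt R (Ici x) t := by
  have ht0 : 0 < t := hx.trans_le ht
  have hcont : ∀ a ∈ Ico 0 (r t), ContinuousAt (fun s => U s a) t := fun a ha =>
    (h.hasDerivAt_apply_fst hf hpos (h.mk_mem_profileDomain ht0 ha)).continuousAt
  refine tendsto_order.2 ⟨fun a ha => ?_, fun a ha => ?_⟩
  · rcases lt_or_ge a 0 with ha0 | ha0
    · filter_upwards [self_mem_nhdsWithin] with s hs using ha0.trans_le (hR s hs).1.1
    · have ha' : a ∈ Ico 0 (r t) := ⟨ha0, ha.trans (hR t ht).1.2⟩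
      filter_upwards [self_mem_nhdsWithin,
        mem_nhdsWithin_of_mem_nhds (h.eventually_lt_radius hf hpos ht0 ha'),
        mem_nhdsWithin_of_mem_nhds ((hcont a ha').eventually_const_lt
          ((hR.gt_iff h hpos hx ht ha').1 ha))] with s hs hsr hsU
      exact (hR.gt_iff h hpos hx hs ⟨ha0, hsr.2⟩).2 hsU
  · obtain ⟨b, hRb, hb⟩ := exists_between (lt_min ha (hR t ht).1.2)
    have hb' : b ∈ Ico 0 (r t) :=
      ⟨(hR t ht).1.1.trans hRb.le, hb.trans_le (min_le_right _ _)⟩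
    filter_upwards [self_mem_nhdsWithin,
      mem_nhdsWithin_of_mem_nhds (h.eventually_lt_radius hf hpos ht0 hb'),
      mem_nhdsWithin_of_mem_nhds ((hcont b hb').eventually_lt_const
        ((hR.lt_iff h hpos hx ht hb').1 hRb))] with s hs hsr hsU
    exact ((hR.lt_iff h hpos hx hs ⟨hb'.1, hsr.2⟩).2 hsU).trans
      (hb.trans_le (min_le_left _ _))

lemma hasDerivAt (hR : IsLevelCurve U r x R) (h : IsProfileFamily f U r)
    (hf : ContDiff ℝ 1 f) (hpos : ∀ x > 0, 0 < f x) (hx : 0 < x) (ht : x < t) :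
    HasDerivAt R (-(variation U (t, R t)).1 / deriv (U t) (R t)) t := by
  have hfst := (ContinuousLinearMap.fst ℝ ℝ ℝ).hasStrictFDerivAt.comp (t, R t)
    (h.hasStrictFDerivAt_phaseMap hf hpos (hR.mem_profileDomain h hx ht.le))
  have hpartials : .fst ℝ ℝ ℝ ∘L ofPartials (variation U (t, R t))
      (deriv (U t) (R t), deriv (deriv (U t)) (R t)) =
        ofPartials (variation U (t, R t)).1 (deriv (U t) (R t)) := by
    ext <;> simp [ofPartials_apply]
  refine hasDerivAt_of_apply_eq_const (hpartials ▸ hfst)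
    ((h.isProfile (hx.trans ht)).deriv_neg hpos ⟨hR.pos h hx ht, (hR t ht.le).1.2.le⟩).ne
    ((hR.continuousWithinAt h hf hpos hx ht.le).continuousAt (Ici_mem_nhds ht)) ?_
  filter_upwards [Ici_mem_nhds ht] with s hs
  exact (hR s hs).2.trans (hR t ht.le).2.symm

lemma hasDerivAt_deriv_apply (hR : IsLevelCurve U r x R) (h : IsProfileFamily f U r)
    (hf : ContDiff ℝ 1 f) (hpos : ∀ x > 0, 0 < f x) (hx : 0 < x) (ht : x < t) :
    HasDerivAt (fun s => deriv (U s) (R s))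
      (-(phaseJacobian U (t, R t) / deriv (U t) (R t))) t := by
  have hV := (h.isProfile (hx.trans ht)).deriv_neg hpos
    ⟨hR.pos h hx ht, (hR t ht.le).1.2.le⟩
  have hcurve := (h.hasStrictFDerivAt_phaseMap hf hpos
    (hR.mem_profileDomain h hx ht.le)).hasFDerivAt.comp_hasDerivAt t
      ((hasDerivAt_id t).prodMk (hR.hasDerivAt h hf hpos hx ht))
  refine ((ContinuousLinearMap.snd ℝ ℝ ℝ).hasFDerivAt.comp_hasDerivAt t hcurve).congr_deriv ?_
  have := hV.ne
  simp only [ofPartials_apply, phaseJacobian, ContinuousLinearMap.coe_snd', Prod.snd_add,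
    Prod.smul_snd, smul_eq_mul]
  field_simp
  ring

lemma continuousOn_deriv_apply (hR : IsLevelCurve U r x R) (h : IsProfileFamily f U r)
    (hf : ContDiff ℝ 1 f) (hpos : ∀ x > 0, 0 < f x) (hx : 0 < x) :
    ContinuousOn (fun s => deriv (U s) (R s)) (Ici x) := fun _ ht =>
  ContinuousAt.comp_continuousWithinAt (f := fun s => (s, R s))
    (h.continuousAt_phaseMap hf hpos (hR.mem_profileDomain h hx ht)).snd
    (continuousWithinAt_id.prodMk (hR.continuousWithinAt h hf hpos hx ht))

lemma strictAntiOn_deriv_apply (hR : IsLevelCurve U r x R) (h : IsProfileFamily f U r)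
    (hf : ContDiff ℝ 1 f) (hpos : ∀ x > 0, 0 < f x) (hsub : ∀ x > 0, x * deriv f x ≤ f x)
    (hx : 0 < x) : StrictAntiOn (fun s => deriv (U s) (R s)) (Ici x) := by
  refine strictAntiOn_of_deriv_neg (convex_Ici x)
    (hR.continuousOn_deriv_apply h hf hpos hx) fun t ht => ?_
  rw [interior_Ici] at ht
  rw [(hR.hasDerivAt_deriv_apply h hf hpos hx ht).deriv]
  exact neg_neg_of_pos (div_pos_of_neg_of_neg
    (h.phaseJacobian_neg hf hpos hsub (hR.mem_profileDomain h hx ht.le))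
    ((h.isProfile (hx.trans ht)).deriv_neg hpos ⟨hR.pos h hx ht, (hR t ht.le).1.2.le⟩))

lemma exists_deriv_apply_lt (hR : IsLevelCurve U r x R) (h : IsProfileFamily f U r)
    (hf : Differentiable ℝ f) (hpos : ∀ x > 0, 0 < f x) (hsub : ∀ x > 0, x * deriv f x ≤ f x)
    (hx : 0 < x) (y : ℝ) : ∃ t ≥ x, deriv (U t) (R t) < y := by
  obtain ⟨C, hC⟩ := h.exists_le_mul_norm_phaseMap_add_one hf hpos hsub
  by_contra! hy
  have hnorm : ∀ t ≥ x, ‖phaseMap U (t, R t)‖ ≤ max x |y| := fun t ht => by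
    have hV : deriv (U t) (R t) ≤ 0 :=
      (h.deriv_nonpos_iff hpos (hR.mem_profileDomain h hx ht)).2 (hR t ht).1.1
    rw [phaseMap, (hR t ht).2, Prod.norm_def, norm_of_nonneg hx.le, norm_eq_abs]
    exact max_le_max le_rfl (abs_le_abs_of_nonpos hV (hy t ht))
  set t := max x 1 + |C| * (max x |y| + 1)
  have hM : 0 ≤ |C| * (max x |y| + 1) := by positivity
  have hxt : x ≤ t := by linarith [le_max_left x 1]
  have ht1 : 1 ≤ t := by linarith [le_max_right x 1]
  have hle : t ≤ |C| * (max x |y| + 1) := (hC t ht1 (R t) (hR t hxt).1).trans (by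
    gcongr
    exacts [le_abs_self C, hnorm t hxt])
  linarith [le_max_right x 1]

end IsLevelCurve

end LevelCurves

section Bijectivity

variable {f : ℝ → ℝ} {U : ℝ → ℝ → ℝ} {r : ℝ → ℝ} {x y : ℝ} {p q : ℝ × ℝ}

lemma neg_snd_mem_profileDomain (hp : p ∈ profileDomain r) : (p.1, -p.2) ∈ profileDomain r :=
  ⟨hp.1, neg_lt_neg hp.2.2, neg_lt.1 hp.2.1⟩

namespace IsProfileFamily

lemma phaseMap_neg_snd (h : IsProfileFamily f U r) (hp : p ∈ profileDomain r) :
    phaseMap U (p.1, -p.2) = ((phaseMap U p).1, -(phaseMap U p).2) :=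
  Prod.ext ((h.isEvenSol hp.1).1 _ (h.snd_mem_Ioo_pi hp))
    ((h.isEvenSol hp.1).deriv_neg (h.snd_mem_Ioo_pi hp))

lemma eq_of_phaseMap_eq_of_nonneg (h : IsProfileFamily f U r) (hf : ContDiff ℝ 1 f)
    (hpos : ∀ x > 0, 0 < f x) (hsub : ∀ x > 0, x * deriv f x ≤ f x)
    (hp : p ∈ profileDomain r) (hp0 : 0 ≤ p.2) (hq : q ∈ profileDomain r) (hq0 : 0 ≤ q.2)
    (hpq : phaseMap U p = phaseMap U q) : p = q := by
  have hU : U p.1 p.2 = U q.1 q.2 := congrArg Prod.fst hpq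
  have hV : deriv (U p.1) p.2 = deriv (U q.1) q.2 := congrArg Prod.snd hpq
  have hx := h.apply_pos hp
  have hxp : U p.1 p.2 ≤ p.1 := (h.apply_mem_Icc hpos hp.1 ⟨hp0, hp.2.2.le⟩).2
  have hxq : U p.1 p.2 ≤ q.1 := hU.trans_le (h.apply_mem_Icc hpos hq.1 ⟨hq0, hq.2.2.le⟩).2
  obtain ⟨R, hR⟩ := h.exists_isLevelCurve hx
  have hRp : R p.1 = p.2 := hR.eq_of_apply_eq h hpos hx hxp ⟨hp0, hp.2.2⟩ rfl
  have hRq : R q.1 = q.2 := hR.eq_of_apply_eq h hpos hx hxq ⟨hq0, hq.2.2⟩ hU.symm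
  have ht : p.1 = q.1 := (hR.strictAntiOn_deriv_apply h hf hpos hsub hx).injOn hxp hxq (by
    simpa only [hRp, hRq] using hV)
  exact Prod.ext ht (by rw [← hRp, ← hRq, ht])

lemma exists_phaseMap_eq_of_nonpos (h : IsProfileFamily f U r) (hf : ContDiff ℝ 1 f)
    (hpos : ∀ x > 0, 0 < f x) (hsub : ∀ x > 0, x * deriv f x ≤ f x) (hx : 0 < x) (hy : y ≤ 0) :
    ∃ p ∈ profileDomain r, phaseMap U p = (x, y) := by
  obtain ⟨R, hR⟩ := h.exists_isLevelCurve hx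
  obtain ⟨s, hs, hsy⟩ :=
    hR.exists_deriv_apply_lt h (hf.differentiable one_ne_zero) hpos hsub hx y
  have hstart : deriv (U x) (R x) = 0 := by
    rw [hR.apply_self h hpos hx, (h.isEvenSol hx).deriv_zero]
  obtain ⟨t, ht, hty⟩ := isPreconnected_Ici.intermediate_value (mem_Ici.2 hs) self_mem_Ici
    (hR.continuousOn_deriv_apply h hf hpos hx) ⟨hsy.le, hy.trans_eq hstart.symm⟩
  exact ⟨(t, R t), hR.mem_profileDomain h hx ht, Prod.ext (hR t ht).2 hty⟩

lemma injOn_phaseMap (h : IsProfileFamily f U r) (hf : ContDiff ℝ 1 f)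
    (hpos : ∀ x > 0, 0 < f x) (hsub : ∀ x > 0, x * deriv f x ≤ f x) :
    InjOn (phaseMap U) (profileDomain r) := by
  intro p hp q hq hpq
  have hV : deriv (U p.1) p.2 = deriv (U q.1) q.2 := congrArg Prod.snd hpq
  have hsign : 0 ≤ p.2 ↔ 0 ≤ q.2 := by
    rw [← h.deriv_nonpos_iff hpos hp, ← h.deriv_nonpos_iff hpos hq, hV]
  rcases le_or_gt 0 p.2 with hp0 | hp0
  · exact h.eq_of_phaseMap_eq_of_nonneg hf hpos hsub hp hp0 hq (hsign.1 hp0) hpq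
  · have hq0 : q.2 < 0 := not_le.1 (mt hsign.2 hp0.not_ge)
    obtain ⟨ht, hρ⟩ := Prod.mk.inj <| h.eq_of_phaseMap_eq_of_nonneg hf hpos hsub
      (neg_snd_mem_profileDomain hp) (neg_nonneg.2 hp0.le)
      (neg_snd_mem_profileDomain hq) (neg_nonneg.2 hq0.le)
      (by rw [h.phaseMap_neg_snd hp, h.phaseMap_neg_snd hq, hpq])
    exact Prod.ext ht (neg_injective hρ)

lemma surjOn_phaseMap (h : IsProfileFamily f U r) (hf : ContDiff ℝ 1 f)
    (hpos : ∀ x > 0, 0 < f x) (hsub : ∀ x > 0, x * deriv f x ≤ f x) :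
    SurjOn (phaseMap U) (profileDomain r) (Ioi 0 ×ˢ univ) := by
  rintro ⟨x, y⟩ ⟨hx, -⟩
  rcases le_total y 0 with hy | hy
  · exact h.exists_phaseMap_eq_of_nonpos hf hpos hsub hx hy
  · obtain ⟨p, hp, hpy⟩ := h.exists_phaseMap_eq_of_nonpos hf hpos hsub hx (neg_nonpos.2 hy)
    exact ⟨(p.1, -p.2), neg_snd_mem_profileDomain hp, by
      rw [h.phaseMap_neg_snd hp, hpy, neg_neg]⟩

lemma bijOn_phaseMap (h : IsProfileFamily f U r) (hf : ContDiff ℝ 1 f)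
    (hpos : ∀ x > 0, 0 < f x) (hsub : ∀ x > 0, x * deriv f x ≤ f x) :
    BijOn (phaseMap U) (profileDomain r) (Ioi 0 ×ˢ univ) :=
  ⟨fun _ hp => ⟨h.apply_pos hp, mem_univ _⟩, h.injOn_phaseMap hf hpos hsub,
    h.surjOn_phaseMap hf hpos hsub⟩

lemma contDiffOn_invFunOn_phaseMap (h : IsProfileFamily f U r) (hf : ContDiff ℝ 1 f)
    (hpos : ∀ x > 0, 0 < f x) (hsub : ∀ x > 0, x * deriv f x ≤ f x) :
    ContDiffOn ℝ 1 (Function.invFunOn (phaseMap U) (profileDomain r)) (Ioi 0 ×ˢ univ) := by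
  rw [← (h.bijOn_phaseMap hf hpos hsub).image_eq]
  refine contDiffOn_invFunOn (h.isOpen_profileDomain hf hpos) (h.injOn_phaseMap hf hpos hsub)
    (h.contDiffOn_phaseMap hf hpos) one_ne_zero fun p hp => ?_
  obtain ⟨e, he⟩ := exists_continuousLinearEquiv_eq_ofPartials (u := variation U p)
    (v := (deriv (U p.1) p.2, deriv (deriv (U p.1)) p.2))
    (h.phaseJacobian_neg hf hpos hsub hp).ne
  exact ⟨e, he ▸ (h.hasStrictFDerivAt_phaseMap hf hpos hp).hasFDerivAt⟩

end IsProfileFamily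

end Bijectivity

/-- Under hypothesis (H), the map `F(t,ρ) = (U_t(ρ), U_t'(ρ))` is a bijection (indeed a
`C¹` diffeomorphism) from `Δ = {(t,ρ) : t > 0, -r_t < ρ < r_t}` onto `(0,∞) × ℝ`. -/
theorem stmt11 (f : ℝ → ℝ) (hf : ContDiff ℝ 1 f)
    (hH : ∀ x > (0:ℝ), 0 < f x ∧ x * deriv f x ≤ f x)
    (U : ℝ → ℝ → ℝ) (r : ℝ → ℝ)
    (hU : ∀ t > (0:ℝ), IsEvenSol f (U t) ∧ U t 0 = t ∧
      r t ∈ Set.Ioo 0 Real.pi ∧ U t (r t) = 0 ∧ ∀ ρ ∈ Set.Ioo 0 (r t), U t ρ ≠ 0) :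
    Set.BijOn (fun p : ℝ × ℝ => (U p.1 p.2, deriv (U p.1) p.2))
      {p : ℝ × ℝ | 0 < p.1 ∧ -r p.1 < p.2 ∧ p.2 < r p.1}
      (Set.Ioi 0 ×ˢ Set.univ) ∧
    ContDiffOn ℝ 1 (fun p : ℝ × ℝ => (U p.1 p.2, deriv (U p.1) p.2))
      {p : ℝ × ℝ | 0 < p.1 ∧ -r p.1 < p.2 ∧ p.2 < r p.1} ∧
    ∃ G : ℝ × ℝ → ℝ × ℝ,
      ContDiffOn ℝ 1 G (Set.Ioi 0 ×ˢ (Set.univ : Set ℝ)) ∧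
      ∀ p ∈ {p : ℝ × ℝ | 0 < p.1 ∧ -r p.1 < p.2 ∧ p.2 < r p.1},
        G (U p.1 p.2, deriv (U p.1) p.2) = p := by
  have hpos : ∀ x > 0, 0 < f x := fun x hx => (hH x hx).1
  have hsub : ∀ x > 0, x * deriv f x ≤ f x := fun x hx => (hH x hx).2
  have h : IsProfileFamily f U r := fun t ht => by
    obtain ⟨hsol, hzero, hr, hUr, hne⟩ := hU t ht
    exact ⟨⟨hsol, by rwa [hzero], hr, hUr, hne⟩, hzero⟩
  exact ⟨h.bijOn_phaseMap hf hpos hsub, h.contDiffOn_phaseMap hf hpos,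
    Function.invFunOn (phaseMap U) (profileDomain r), h.contDiffOn_invFunOn_phaseMap hf hpos hsub,
    (h.injOn_phaseMap hf hpos hsub).leftInvOn_invFunOn⟩
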